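/- Let ω be a modulus of continuity of order n ∈ ℕ, let D ⊂ ℝ^d be a bounded Lipschitz domain, let K(x) = Ω(x)/|x|^d be the kernel of a homogeneous C^{n+1}-smooth Calderón–Zygmund operator, and let C₀ > 0. Then there exists a constant C such that for every f ∈ 𝒞_ω(D), every cube Q with 2Q ⊂ D, and every polynomial P_Q ∈ 𝒫_n of near best approximation with constant C₀ for f on Q, the function g(y) = ∫_{D∖2Q} K(y−u)·(f(u) − P_Q(u)) du (an absolutely convergent integral for y ∈ Q) admits a polynomial P₃ ∈ 𝒫_n with (1/|Q|)·∫_Q |g(y) − P₃(y)| dy ≤ C·ω(ℓ(Q))·(‖f‖_{ω,D} + ‖f‖_{L¹(D)}). -/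

import Mathlib

open MeasureTheory Filter Set Metric
open scoped ENNReal Topology InnerProductSpace

noncomputable section

/-- The axis-parallel closed cube in `ℝ^d` with center `x₀` and side length `l`. -/
def cube {d : ℕ} (x₀ : EuclideanSpace ℝ (Fin d)) (l : ℝ) : Set (EuclideanSpace ℝ (Fin d)) :=
  {x | ∀ i, |x i - x₀ i| ≤ l / 2}

/-- `𝒫_n`: functions on `ℝ^d` given by polynomials of total degree at most `n`. -/
def PolyLE (d n : ℕ) : Set (EuclideanSpace ℝ (Fin d) → ℝ) :=
  {P | ∃ p : MvPolynomial (Fin d) ℝ, p.totalDegree ≤ n ∧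
    ∀ x, MvPolynomial.eval (fun i => x i) p = P x}

/-- The Campanato-type Zygmund seminorm `‖f‖_{ω,D}` (valued in `ℝ≥0∞`). -/
def zygSeminorm {d : ℕ} (ω : ℝ → ℝ) (n : ℕ) (D : Set (EuclideanSpace ℝ (Fin d)))
    (f : EuclideanSpace ℝ (Fin d) → ℝ) : ℝ≥0∞ :=
  ⨆ (x₀ : EuclideanSpace ℝ (Fin d)) (l : ℝ) (_ : 0 < l) (_ : cube x₀ l ⊆ D),
    ⨅ (P : EuclideanSpace ℝ (Fin d) → ℝ) (_ : P ∈ PolyLE d n),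
      (ENNReal.ofReal (ω l * l ^ d))⁻¹ * ∫⁻ x in cube x₀ l, ENNReal.ofReal |f x - P x|

/-- The `L¹(D)` norm (valued in `ℝ≥0∞`). -/
def l1Norm {d : ℕ} (D : Set (EuclideanSpace ℝ (Fin d)))
    (f : EuclideanSpace ℝ (Fin d) → ℝ) : ℝ≥0∞ :=
  ∫⁻ x in D, ENNReal.ofReal |f x|

/-- The two regularity conditions of order `m` for a modulus of continuity:
`ω(t)/t^q` almost decreasing for some `m ≤ q < m+1`, and `ω(t)/t^r` almost
increasing for some `m-1 < r < m`. -/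
def ModulusConds (ω : ℝ → ℝ) (m : ℕ) : Prop :=
  (∃ q : ℝ, (m : ℝ) ≤ q ∧ q < (m : ℝ) + 1 ∧ ∃ C : ℝ, 0 < C ∧
      ∀ s t : ℝ, 1 < s → 0 < t → ω (s * t) ≤ C * s ^ q * ω t) ∧
  (∃ r : ℝ, (m : ℝ) - 1 < r ∧ r < (m : ℝ) ∧ ∃ C : ℝ, 0 < C ∧
      ∀ s t : ℝ, 0 < s → s < 1 → 0 < t → ω (s * t) ≤ C * s ^ r * ω t)

/-- `ω` is a modulus of continuity of order `n`: continuous, increasing, `ω(0)=0`,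
nonnegative, and `n` is the smallest positive integer satisfying the two
regularity conditions. -/
structure IsModulusOfOrder (ω : ℝ → ℝ) (n : ℕ) : Prop where
  continuousOn : ContinuousOn ω (Set.Ici 0)
  monotoneOn : MonotoneOn ω (Set.Ici 0)
  nonneg : ∀ t, 0 ≤ t → 0 ≤ ω t
  map_zero : ω 0 = 0
  npos : 0 < n
  conds : ModulusConds ω n
  minimal : ∀ m : ℕ, 0 < m → ModulusConds ω m → n ≤ m

/-- `ξ(r) = ∫_r^1 ω(t) t^{-n-1} dt`. -/
def xi (ω : ℝ → ℝ) (n : ℕ) (r : ℝ) : ℝ :=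
  ∫ t in Set.Ioc r 1, ω t / t ^ (n + 1)

/-- The associated modulus of continuity `ω̃(x) = ω(x)/max{1, ξ(x)}`. -/
def omegaTilde (ω : ℝ → ℝ) (n : ℕ) (x : ℝ) : ℝ :=
  ω x / max 1 (xi ω n x)

/-- `D ⊂ ℝ^d` is a bounded Lipschitz domain: it is open, connected, bounded, and near
every boundary point, after a rigid motion, it coincides inside an `R`-window with the
region above the graph of a Lipschitz function (with Lipschitz constant at most `δ`). -/
def IsLipschitzDomain {d : ℕ} (D : Set (EuclideanSpace ℝ (Fin d))) : Prop :=
  IsOpen D ∧ IsConnected D ∧ Bornology.IsBounded D ∧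
  ∃ δ R : ℝ, 0 < δ ∧ 0 < R ∧
    ∀ a ∈ frontier D,
      ∃ (g : EuclideanSpace ℝ (Fin d) ≃ᵢ EuclideanSpace ℝ (Fin d)) (j : Fin d)
        (A : EuclideanSpace ℝ (Fin d) → ℝ),
        g a = 0 ∧
        LipschitzWith (Real.toNNReal δ) A ∧
        (∀ x y : EuclideanSpace ℝ (Fin d), (∀ i, i ≠ j → x i = y i) → A x = A y) ∧
        (g '' D) ∩ cube 0 R = {x ∈ cube (0 : EuclideanSpace ℝ (Fin d)) R | A x < x j}

/-- `Ω` is the density of a `C^k`-smooth homogeneous Calderón–Zygmund kernel: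
homogeneous of degree `0`, `C^k` away from the origin, with zero mean on the
unit sphere. -/
structure IsCZDensity (d : ℕ) (k : ℕ∞) (Ω : EuclideanSpace ℝ (Fin d) → ℝ) : Prop where
  homog : ∀ c : ℝ, 0 < c → ∀ x : EuclideanSpace ℝ (Fin d), Ω (c • x) = Ω x
  smooth : ContDiffOn ℝ k Ω {x : EuclideanSpace ℝ (Fin d) | x ≠ 0}
  meanZero : ∫ x : Metric.sphere (0 : EuclideanSpace ℝ (Fin d)) 1,
      Ω x ∂((volume : Measure (EuclideanSpace ℝ (Fin d))).toSphere) = 0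

/-- `g = T_D f`: `g` vanishes off `D` and, for a.e. `y ∈ D`, `g y` is the principal
value `lim_{ε→0+} ∫_{x ∈ D, |y-x|>ε} f(x) K(y-x) dx` (here `f` is implicitly
multiplied by `χ_D`). -/
def IsRestrictedCZ {d : ℕ} (D : Set (EuclideanSpace ℝ (Fin d)))
    (K : EuclideanSpace ℝ (Fin d) → ℝ) (f g : EuclideanSpace ℝ (Fin d) → ℝ) : Prop :=
  (∀ y, y ∉ D → g y = 0) ∧
  ∀ᵐ y ∂(volume.restrict D),
    Tendsto (fun ε : ℝ => ∫ x in {x ∈ D | ε < dist y x}, f x * K (y - x))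
      (𝓝[>] (0 : ℝ)) (𝓝 (g y))

/-- `P` is a polynomial of near best approximation (with constant `C₀`) for `f`
on the cube with center `x₀` and side length `l`. -/
def IsNearBestApprox {d : ℕ} (ω : ℝ → ℝ) (n : ℕ) (D : Set (EuclideanSpace ℝ (Fin d)))
    (f : EuclideanSpace ℝ (Fin d) → ℝ) (C₀ : ℝ) (x₀ : EuclideanSpace ℝ (Fin d)) (l : ℝ)
    (P : EuclideanSpace ℝ (Fin d) → ℝ) : Prop :=
  P ∈ PolyLE d n ∧
    (ENNReal.ofReal (l ^ d))⁻¹ * ∫⁻ x in cube x₀ l, ENNReal.ofReal |f x - P x| ≤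
      ENNReal.ofReal (C₀ * ω l) * zygSeminorm ω n D f


/-! ### Polynomials -/

lemma polyLE_affine {d n : ℕ} {P : EuclideanSpace ℝ (Fin d) → ℝ} (hP : P ∈ PolyLE d n)
    (z : EuclideanSpace ℝ (Fin d)) (l : ℝ) : (fun x => P (z + l • x)) ∈ PolyLE d n := by
  obtain ⟨p, hp, hpe⟩ := hP
  refine ⟨MvPolynomial.aeval
    (fun i => MvPolynomial.C (z i) + MvPolynomial.C l * MvPolynomial.X i) p, ?_, ?_⟩
  · rw [MvPolynomial.aeval_def, MvPolynomial.eval₂_eq']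
    apply MvPolynomial.totalDegree_finsetSum_le
    intro m hm
    refine (MvPolynomial.totalDegree_mul _ _).trans ?_
    rw [MvPolynomial.algebraMap_eq, MvPolynomial.totalDegree_C, zero_add]
    refine (MvPolynomial.totalDegree_finsetProd _ _).trans ?_
    refine le_trans (Finset.sum_le_sum (g := fun i => m i) ?_) ?_
    · intro i _
      refine (MvPolynomial.totalDegree_pow _ _).trans ?_
      have : (MvPolynomial.C (z i) + MvPolynomial.C l * MvPolynomial.X i :
          MvPolynomial (Fin d) ℝ).totalDegree ≤ 1 := by
        refine (MvPolynomial.totalDegree_add _ _).trans (max_le (by simp) ?_)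
        refine (MvPolynomial.totalDegree_mul _ _).trans ?_
        simp
      nlinarith [Nat.zero_le (m i)]
    · refine le_trans ?_ hp
      have := MvPolynomial.le_totalDegree hm
      rwa [Finsupp.sum_fintype _ _ (fun _ => rfl)] at this
  · intro x
    have : MvPolynomial.eval (fun i => x i) (MvPolynomial.aeval
      (fun i => MvPolynomial.C (z i) + MvPolynomial.C l * MvPolynomial.X i) p)
      = MvPolynomial.eval (fun i => z i + l * x i) p := by
      rw [← MvPolynomial.aeval_eq_eval, ← MvPolynomial.aeval_eq_eval]
      rw [← MvPolynomial.bind₁, MvPolynomial.aeval_bind₁]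
      simp
    rw [this]
    have h2 := hpe (z + l • x)
    simpa using h2

lemma polyLE_add {d n : ℕ} {P R : EuclideanSpace ℝ (Fin d) → ℝ} (hP : P ∈ PolyLE d n)
    (hR : R ∈ PolyLE d n) : (fun x => P x + R x) ∈ PolyLE d n := by
  obtain ⟨p, hp, hpe⟩ := hP
  obtain ⟨r, hr, hre⟩ := hR
  exact ⟨p + r, (MvPolynomial.totalDegree_add _ _).trans (max_le hp hr), by simp [hpe, hre]⟩

lemma polyLE_sub {d n : ℕ} {P R : EuclideanSpace ℝ (Fin d) → ℝ} (hP : P ∈ PolyLE d n)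
    (hR : R ∈ PolyLE d n) : (fun x => P x - R x) ∈ PolyLE d n := by
  obtain ⟨p, hp, hpe⟩ := hP
  obtain ⟨r, hr, hre⟩ := hR
  exact ⟨p - r, (MvPolynomial.totalDegree_sub _ _).trans (max_le hp hr), by simp [hpe, hre]⟩

lemma polyLE_const {d n : ℕ} (c : ℝ) : (fun _ => c) ∈ PolyLE d n :=
  ⟨MvPolynomial.C c, by simp, by simp⟩

lemma polyLE_const_mul {d n : ℕ} (c : ℝ) {P : EuclideanSpace ℝ (Fin d) → ℝ}
    (hP : P ∈ PolyLE d n) : (fun x => c * P x) ∈ PolyLE d n := by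
  obtain ⟨p, hp, hpe⟩ := hP
  exact ⟨MvPolynomial.C c * p, (MvPolynomial.totalDegree_mul _ _).trans (by simpa using hp),
    by simp [hpe]⟩

lemma polyLE_sum {d n : ℕ} {ι : Type*} (s : Finset ι) (P : ι → EuclideanSpace ℝ (Fin d) → ℝ)
    (hP : ∀ i ∈ s, P i ∈ PolyLE d n) : (fun x => ∑ i ∈ s, P i x) ∈ PolyLE d n := by
  classical
  induction s using Finset.induction_on with
  | empty => simpa using polyLE_const 0
  | insert a s ha ih =>
    simp_rw [Finset.sum_insert ha]
    exact polyLE_add (hP a (by simp)) (ih (fun i hi => hP i (by simp [hi])))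

/-- products of `k ≤ n` affine coordinate functions. -/
lemma polyLE_prod {d n k : ℕ} (hk : k ≤ n) (σ : Fin k → Fin d) (z : EuclideanSpace ℝ (Fin d)) :
    (fun x : EuclideanSpace ℝ (Fin d) => ∏ i, (x (σ i) - z (σ i))) ∈ PolyLE d n := by
  refine ⟨∏ i, (MvPolynomial.X (σ i) - MvPolynomial.C (z (σ i))), ?_, by simp⟩
  refine (MvPolynomial.totalDegree_finsetProd _ _).trans ?_
  refine (Finset.sum_le_sum (g := fun _ => 1) ?_).trans (by simpa using hk)
  intro i _
  exact (MvPolynomial.totalDegree_sub_C_le _ _).trans (by simp)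

lemma polyLE_continuous {d n : ℕ} {P : EuclideanSpace ℝ (Fin d) → ℝ} (hP : P ∈ PolyLE d n) :
    Continuous P := by
  obtain ⟨p, hp, hpe⟩ := hP
  have : P = fun x => MvPolynomial.eval (fun i => x i) p := by
    funext x; rw [hpe]
  rw [this]
  have h := MvPolynomial.continuous_eval p
  exact h.comp (by fun_prop)

lemma cube_isClosed {d : ℕ} (z : EuclideanSpace ℝ (Fin d)) (l : ℝ) : IsClosed (cube z l) := by
  have : cube z l = ⋂ i, {x | |x i - z i| ≤ l / 2} := by
    ext x; simp [cube]
  rw [this]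
  exact isClosed_iInter fun i => isClosed_le (by fun_prop) (by fun_prop)

lemma cube_subset_closedBall {d : ℕ} (z : EuclideanSpace ℝ (Fin d)) (l : ℝ) (hl : 0 ≤ l) :
    cube z l ⊆ closedBall z (d * l) := by
  intro x hx
  rw [mem_closedBall, dist_eq_norm, EuclideanSpace.norm_eq]
  apply Real.sqrt_le_iff.mpr
  refine ⟨by positivity, ?_⟩
  have : ∀ i, ‖(x - z) i‖ ^ 2 ≤ l ^ 2 := by
    intro i
    have := hx i
    simp only [PiLp.sub_apply, Real.norm_eq_abs]
    have h0 := abs_nonneg (x i - z i)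
    nlinarith
  refine (Finset.sum_le_sum fun i _ => this i).trans ?_
  simp only [Finset.sum_const, Finset.card_univ, Fintype.card_fin, nsmul_eq_mul]
  have : (d:ℝ) ≤ (d:ℝ)^2 := by exact_mod_cast Nat.le_self_pow two_ne_zero d
  nlinarith [sq_nonneg l]

lemma cube_isCompact {d : ℕ} (z : EuclideanSpace ℝ (Fin d)) (l : ℝ) (hl : 0 ≤ l) :
    IsCompact (cube z l) :=
  (isCompact_closedBall z (d * l)).of_isClosed_subset (cube_isClosed z l)
    (cube_subset_closedBall z l hl)

lemma cube_measurable {d : ℕ} (z : EuclideanSpace ℝ (Fin d)) (l : ℝ) :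
    MeasurableSet (cube z l) := (cube_isClosed z l).measurableSet

/-- coordinate bound -/
lemma abs_coord_le {d : ℕ} (x : EuclideanSpace ℝ (Fin d)) (i : Fin d) : |x i| ≤ ‖x‖ :=
  PiLp.norm_apply_le x i

lemma poly_growth {d n : ℕ} (p : MvPolynomial (Fin d) ℝ) (hp : p.totalDegree ≤ n) :
    ∃ B : ℝ, 0 ≤ B ∧ ∀ (R : ℝ) (x : Fin d → ℝ), 1 ≤ R → (∀ i, |x i| ≤ R) →
      |MvPolynomial.eval x p| ≤ B * R ^ n := by
  refine ⟨∑ m ∈ p.support, |p.coeff m|, by positivity, ?_⟩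
  intro R x hR hx
  rw [MvPolynomial.eval_eq', Finset.sum_mul]
  refine (Finset.abs_sum_le_sum_abs _ _).trans (Finset.sum_le_sum ?_)
  intro m hm
  rw [abs_mul]
  gcongr
  rw [Finset.abs_prod]
  calc ∏ i, |x i ^ m i| ≤ ∏ i, R ^ m i := by
        apply Finset.prod_le_prod
        · intros; positivity
        · intro i _; rw [abs_pow]; gcongr; exact hx i
    _ = R ^ (∑ i, m i) := by rw [Finset.prod_pow_eq_pow_sum]
    _ ≤ R ^ n := by
        apply pow_le_pow_right₀ hR
        refine le_trans ?_ hp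
        have := MvPolynomial.le_totalDegree hm
        rwa [Finsupp.sum_fintype _ _ (fun _ => rfl)] at this

lemma poly_norm_unit (d n : ℕ) : ∃ A : ℝ, 1 ≤ A ∧ ∀ P ∈ PolyLE d n,
    ∀ (R : ℝ) (x : EuclideanSpace ℝ (Fin d)), 1 ≤ R → (∀ i, |x i| ≤ R) →
      |P x| ≤ A * R ^ n * ∫ y in cube (0 : EuclideanSpace ℝ (Fin d)) 1, |P y| := by
  let V := MvPolynomial.restrictTotalDegree (Fin d) ℝ n
  let b := Module.finBasis ℝ V
  let N := Module.finrank ℝ V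
  have hb : ∀ k, ((b k : V) : MvPolynomial (Fin d) ℝ).totalDegree ≤ n := fun k =>
    (MvPolynomial.mem_restrictTotalDegree _ _ _).1 (b k).2
  choose B hB0 hB using fun k => poly_growth _ (hb k)
  let ev : (Fin N → ℝ) → EuclideanSpace ℝ (Fin d) → ℝ := fun c x =>
    ∑ k, c k * MvPolynomial.eval (fun i => x i) ((b k : V) : MvPolynomial (Fin d) ℝ)
  have hevc : Continuous (Function.uncurry ev) := by
    refine continuous_finsetSum _ fun k _ => ?_
    refine Continuous.mul (by fun_prop) ?_
    exact (MvPolynomial.continuous_eval _).comp (by fun_prop)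
  let F : (Fin N → ℝ) → ℝ := fun c => ∫ y in cube (0 : EuclideanSpace ℝ (Fin d)) 1, |ev c y|
  have hFc : Continuous F := by
    apply continuous_parametric_integral_of_continuous (f := fun c y => |ev c y|)
    · exact hevc.abs
    · exact cube_isCompact 0 1 zero_le_one
  have hpos : ∀ c ∈ sphere (0 : Fin N → ℝ) 1, 0 < F c := by
    intro c hc
    have h0 : 0 ≤ F c := integral_nonneg fun _ => abs_nonneg _
    refine lt_of_le_of_ne h0 fun h => ?_
    have hcont : Continuous (ev c) := hevc.comp (by fun_prop : Continuous fun y => (c, y))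
    have hae := (setIntegral_eq_zero_iff_of_nonneg_ae (ae_of_all _ fun _ => abs_nonneg _)
      (hcont.abs.continuousOn.integrableOn_compact (cube_isCompact 0 1 zero_le_one))).1 h.symm
    let U : Set (EuclideanSpace ℝ (Fin d)) := {x | ∀ i, |x i| < 1 / 2}
    have hU : IsOpen U := by
      have : U = ⋂ i, {x | |x i| < 1 / 2} := by ext x; simp [U]
      rw [this]
      exact isOpen_iInter_of_finite fun i => isOpen_lt (by fun_prop) (by fun_prop)
    have hUs : U ⊆ cube 0 1 := fun x hx i => by simpa using (hx i).le
    have hae' : (fun y => |ev c y|) =ᵐ[volume.restrict U] 0 :=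
      ae_restrict_of_ae_restrict_of_subset hUs hae
    have hEq := Measure.eqOn_open_of_ae_eq hae' hU hcont.abs.continuousOn continuousOn_const
    have hz : (∑ k, c k • ((b k : V) : MvPolynomial (Fin d) ℝ)) = 0 := by
      apply MvPolynomial.funext_set (fun _ => Ioo (-1/2 : ℝ) (1/2))
        (fun _ => Ioo_infinite (by norm_num))
      intro x hx
      have hx' : (WithLp.toLp 2 x : EuclideanSpace ℝ (Fin d)) ∈ U := by
        intro i
        have := hx i (mem_univ _)
        simp only [mem_Ioo] at this
        rw [abs_lt]; constructor <;> simp <;> linarith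
      have h1 := hEq hx'
      have h2 : ev c (WithLp.toLp 2 x) = 0 := by simpa using h1
      simpa [ev, map_sum, MvPolynomial.smul_eval] using h2
    have hz' : (∑ k, c k • b k) = 0 := by
      apply Subtype.ext
      simpa using hz
    have hc0 := (Fintype.linearIndependent_iff.1 b.linearIndependent) c hz'
    have : c = 0 := funext hc0
    rw [this] at hc
    simp at hc
  obtain ⟨a, ha0, ha⟩ := (isCompact_sphere (0 : Fin N → ℝ) 1).exists_forall_le' hFc.continuousOn hpos
  have hFle : ∀ c, a * ‖c‖ ≤ F c := by
    intro c
    rcases eq_or_ne c 0 with rfl | hc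
    · simp [F, ev]
    · have hn : 0 < ‖c‖ := norm_pos_iff.2 hc
      have h1 := ha (‖c‖⁻¹ • c) (by simp [norm_smul, hn.ne'])
      have h2 : F (‖c‖⁻¹ • c) = ‖c‖⁻¹ * F c := by
        simp only [F]
        rw [← integral_const_mul]
        congr 1
        funext y
        have : ev (‖c‖⁻¹ • c) y = ‖c‖⁻¹ * ev c y := by
          simp [ev, Finset.mul_sum, mul_assoc]
        rw [this, abs_mul, abs_of_pos (inv_pos.2 hn)]
      rw [h2] at h1
      rw [inv_mul_eq_div, le_div_iff₀ hn] at h1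
      exact h1
  refine ⟨max 1 ((∑ k, B k) / a), le_max_left _ _, ?_⟩
  rintro P ⟨p, hp, hpe⟩ R x hR hx
  let c : Fin N → ℝ := fun k => b.repr ⟨p, (MvPolynomial.mem_restrictTotalDegree _ _ _).2 hp⟩ k
  have hPev : ∀ y, P y = ev c y := by
    intro y
    have h := b.sum_repr ⟨p, (MvPolynomial.mem_restrictTotalDegree _ _ _).2 hp⟩
    have h' : (∑ k, c k • ((b k : V) : MvPolynomial (Fin d) ℝ)) = p := by
      have := congrArg Subtype.val h
      rw [Submodule.coe_sum] at this
      exact this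
    rw [← hpe, ← h']
    simp [ev, map_sum, MvPolynomial.smul_eval]
  have hI : (∫ y in cube (0 : EuclideanSpace ℝ (Fin d)) 1, |P y|) = F c := by
    simp only [F]; congr 1; funext y; rw [hPev]
  rw [hI, hPev]
  have hRn : 0 ≤ R ^ n := by positivity
  calc |ev c x| ≤ ∑ k, ‖c‖ * (B k * R ^ n) := by
        refine (Finset.abs_sum_le_sum_abs _ _).trans (Finset.sum_le_sum fun k _ => ?_)
        rw [abs_mul]
        have := norm_le_pi_norm c k
        rw [Real.norm_eq_abs] at this
        gcongr
        exact hB k R _ hR hx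
    _ = (∑ k, B k) / a * R ^ n * (a * ‖c‖) := by
        rw [← Finset.mul_sum, ← Finset.sum_mul]; field_simp
    _ ≤ max 1 ((∑ k, B k) / a) * R ^ n * F c := by
        have h3 : 0 ≤ a * ‖c‖ := by positivity
        gcongr
        · exact le_max_right _ _
        · exact hFle c

lemma setIntegral_cube {d : ℕ} (z : EuclideanSpace ℝ (Fin d)) {l : ℝ} (hl : 0 < l)
    (h : EuclideanSpace ℝ (Fin d) → ℝ) :
    ∫ y in cube (0 : EuclideanSpace ℝ (Fin d)) 1, h (z + l • y) = (l ^ d)⁻¹ * ∫ x in cube z l, h x := by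
  have h1 := Measure.setIntegral_comp_smul_of_pos (volume : Measure (EuclideanSpace ℝ (Fin d)))
    (fun x => h (z + x)) (cube (0 : EuclideanSpace ℝ (Fin d)) 1) hl
  simp only [finrank_euclideanSpace, Fintype.card_fin, smul_eq_mul] at h1
  rw [h1]
  congr 1
  have h2 := (measurePreserving_add_left (volume : Measure (EuclideanSpace ℝ (Fin d))) z).setIntegral_preimage_emb
    (measurableEmbedding_addLeft z) h (cube z l)
  rw [← h2]
  congr 2
  ext x
  rw [mem_preimage, mem_smul_set_iff_inv_smul_mem₀ hl.ne']
  simp only [cube, mem_ofPred_eq, PiLp.smul_apply, PiLp.zero_apply, PiLp.add_apply, smul_eq_mul, sub_zero, abs_mul,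
    abs_inv, abs_of_pos hl, add_sub_cancel_left]
  refine forall_congr' fun i => ?_
  rw [inv_mul_le_iff₀ hl]
  constructor <;> intro h <;> linarith

lemma poly_norm (d n : ℕ) : ∃ A : ℝ, 1 ≤ A ∧ ∀ P ∈ PolyLE d n,
    ∀ (z x : EuclideanSpace ℝ (Fin d)) (l R : ℝ), 0 < l → l ≤ R → (∀ i, |x i - z i| ≤ R) →
      |P x| ≤ A * (R / l) ^ n * ((l ^ d)⁻¹ * ∫ y in cube z l, |P y|) := by
  obtain ⟨A, hA, h⟩ := poly_norm_unit d n
  refine ⟨A, hA, fun P hP z x l R hl hlR hx => ?_⟩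
  have := h _ (polyLE_affine hP z l) (R / l) (l⁻¹ • (x - z)) (by rwa [one_le_div hl]) (by
    intro i
    simp only [PiLp.smul_apply, PiLp.sub_apply, smul_eq_mul, abs_mul, abs_inv, abs_of_pos hl]
    rw [inv_mul_eq_div]
    gcongr
    exact hx i)
  rw [setIntegral_cube z hl (fun x => |P x|)] at this
  simpa [smul_smul, hl.ne'] using this

lemma volume_cube_scale {d : ℕ} (z : EuclideanSpace ℝ (Fin d)) {l : ℝ} (hl : 0 < l) :
    volume.real (cube z l) = l ^ d * volume.real (cube (0 : EuclideanSpace ℝ (Fin d)) 1) := by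
  have := setIntegral_cube z hl (fun _ => (1:ℝ))
  simp at this
  rw [this]
  field_simp

/-! ### The kernel -/

lemma multilinear_expand {d k : ℕ}
    (A : ContinuousMultilinearMap ℝ (fun _ : Fin k => EuclideanSpace ℝ (Fin d)) ℝ)
    (h : EuclideanSpace ℝ (Fin d)) :
    A (fun _ => h) = ∑ σ : Fin k → Fin d,
      A (fun i => EuclideanSpace.single (σ i) (1:ℝ)) * ∏ i, h (σ i) := by
  have hh : h = ∑ j, h j • EuclideanSpace.single j (1:ℝ) := by
    have := (EuclideanSpace.basisFun (Fin d) ℝ).sum_repr h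
    simpa using this.symm
  have h1 : (fun _ : Fin k => h) = fun _ : Fin k => ∑ j, h j • EuclideanSpace.single j (1:ℝ) := by
    funext _; exact hh
  rw [h1]
  have h2 := A.toMultilinearMap.map_sum
    (fun (_ : Fin k) (j : Fin d) => h j • EuclideanSpace.single j (1:ℝ))
  simp only [ContinuousMultilinearMap.coe_coe] at h2
  rw [h2]
  refine Finset.sum_congr rfl fun σ _ => ?_
  have h3 := A.toMultilinearMap.map_smul_univ (fun i => h (σ i))
    (fun i => EuclideanSpace.single (σ i) (1:ℝ))
  simp only [ContinuousMultilinearMap.coe_coe] at h3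
  rw [h3, smul_eq_mul, mul_comm]

lemma kernel_contDiffAt {d n : ℕ} {Ω K : EuclideanSpace ℝ (Fin d) → ℝ}
    (hΩ : IsCZDensity d ((n : ℕ∞) + 1) Ω) (hK : K = fun x => Ω x / ‖x‖ ^ d)
    {x : EuclideanSpace ℝ (Fin d)} (hx : x ≠ 0) : ContDiffAt ℝ (n + 1) K x := by
  have h1 : ContDiffAt ℝ (n + 1) Ω x := by
    have := hΩ.smooth.contDiffAt (isOpen_ne.mem_nhds hx)
    exact_mod_cast this
  rw [hK]
  exact h1.div ((contDiffAt_norm ℝ hx).pow d) (by positivity)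

lemma kernel_homog {d n : ℕ} {Ω K : EuclideanSpace ℝ (Fin d) → ℝ}
    (hΩ : IsCZDensity d ((n : ℕ∞) + 1) Ω) (hK : K = fun x => Ω x / ‖x‖ ^ d)
    (c : ℝ) (hc : 0 < c) (x : EuclideanSpace ℝ (Fin d)) : K (c • x) = (c ^ d)⁻¹ * K x := by
  simp only [hK, hΩ.homog c hc, norm_smul, Real.norm_eq_abs, abs_of_pos hc, mul_pow]
  rw [div_eq_mul_inv, div_eq_mul_inv, mul_inv]; ring

lemma kernel_taylor {d n : ℕ} {Ω K : EuclideanSpace ℝ (Fin d) → ℝ}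
    (hΩ : IsCZDensity d ((n : ℕ∞) + 1) Ω) (hK : K = fun x => Ω x / ‖x‖ ^ d)
    (η H : ℝ) (hη : 0 < η) (hH : 0 ≤ H) :
    ∃ a : (k : ℕ) → (Fin k → Fin d) → EuclideanSpace ℝ (Fin d) → ℝ,
      (∀ k ≤ n, ∀ σ, ContinuousOn (a k σ) {x | x ≠ 0}) ∧
      ∃ CK : ℝ, 0 < CK ∧ ∀ w h : EuclideanSpace ℝ (Fin d), w ≠ 0 → ‖h‖ ≤ H * ‖w‖ →
        (∀ t ∈ Icc (0:ℝ) 1, η * ‖w‖ ≤ ‖w + t • h‖) →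
        |K (w + h) - ∑ k ∈ Finset.range (n + 1), ∑ σ : Fin k → Fin d, a k σ w * ∏ i, h (σ i)|
          ≤ CK * (‖h‖ ^ (n + 1) * (‖w‖ ^ (d + n + 1))⁻¹) := by
  have hcd : ∀ {x : EuclideanSpace ℝ (Fin d)}, x ≠ 0 → ContDiffAt ℝ (n + 1) K x :=
    fun hx => kernel_contDiffAt hΩ hK hx
  have hcont : ∀ k ≤ n + 1, ∀ {x : EuclideanSpace ℝ (Fin d)}, x ≠ 0 →
      ContinuousAt (iteratedFDeriv ℝ k K) x := by
    intro k hk x hx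
    have := (hcd hx).iteratedFDeriv_right (i := k) (m := 0) (by
      simp only [zero_add]; exact_mod_cast hk)
    exact this.continuousAt
  let a : (k : ℕ) → (Fin k → Fin d) → EuclideanSpace ℝ (Fin d) → ℝ := fun k σ w =>
    (‖w‖ ^ (d + k))⁻¹ * ((k.factorial : ℝ)⁻¹ * iteratedFDeriv ℝ k K (‖w‖⁻¹ • w)
      (fun i => EuclideanSpace.single (σ i) (1:ℝ)))
  refine ⟨a, ?_, ?_⟩
  · intro k hk σ w hw
    have hw : w ≠ 0 := hw
    have hn : ‖w‖ ≠ 0 := norm_ne_zero_iff.2 hw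
    apply ContinuousAt.continuousWithinAt
    have h1 : ContinuousAt (fun w : EuclideanSpace ℝ (Fin d) => ‖w‖⁻¹ • w) w :=
      (continuous_norm.continuousAt.inv₀ hn).smul continuousAt_id
    have h2 : ContinuousAt (fun w : EuclideanSpace ℝ (Fin d) =>
        iteratedFDeriv ℝ k K (‖w‖⁻¹ • w)) w :=
      ContinuousAt.comp (f := fun w : EuclideanSpace ℝ (Fin d) => ‖w‖⁻¹ • w)
        (hcont k (by omega) (smul_ne_zero (inv_ne_zero hn) hw)) h1
    refine ContinuousAt.mul ?_ (continuousAt_const.mul ?_)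
    · exact (continuous_norm.pow _).continuousAt.inv₀ (pow_ne_zero _ hn)
    · exact h2.eval_const _
  · let S : Set (EuclideanSpace ℝ (Fin d)) := {x | η ≤ ‖x‖} ∩ closedBall 0 (1 + H)
    have hS : IsCompact S := (isCompact_closedBall 0 (1 + H)).inter_left
      (isClosed_le continuous_const continuous_norm)
    have hS0 : ∀ x ∈ S, x ≠ 0 := by
      rintro x ⟨hx, -⟩ rfl
      simp only [mem_ofPred_eq, norm_zero] at hx
      linarith
    obtain ⟨M, hM⟩ := hS.exists_bound_of_continuousOn
      (f := iteratedFDeriv ℝ (n + 1) K) fun x hx =>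
        (hcont (n+1) le_rfl (hS0 x hx)).continuousWithinAt
    refine ⟨max M 1, by positivity, ?_⟩
    intro w h hw hhH hseg
    have hn : 0 < ‖w‖ := norm_pos_iff.2 hw
    set ρ := ‖w‖ with hρ
    set θ := ρ⁻¹ • w with hθ
    set v := ρ⁻¹ • h with hv
    have hvn : ‖v‖ = ‖h‖ / ρ := by
      rw [hv, norm_smul, norm_inv, Real.norm_eq_abs, abs_of_pos hn]; field_simp
    have hvH : ‖v‖ ≤ H := by rw [hvn, div_le_iff₀ hn]; exact hhH
    have hθn : ‖θ‖ = 1 := by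
      rw [hθ, norm_smul, norm_inv, Real.norm_eq_abs, abs_of_pos hn, ← hρ]; field_simp
    have hmem : ∀ t ∈ Icc (0:ℝ) 1, θ + t • v ∈ S := by
      intro t ht
      have e : θ + t • v = ρ⁻¹ • (w + t • h) := by
        rw [hθ, hv, smul_add, smul_comm t]
      constructor
      · simp only [mem_ofPred_eq]
        rw [e, norm_smul, norm_inv, Real.norm_eq_abs, abs_of_pos hn, inv_mul_eq_div,
          le_div_iff₀ hn]
        exact hseg t ht
      · rw [mem_closedBall_zero_iff]
        refine (norm_add_le _ _).trans ?_
        rw [hθn, norm_smul, Real.norm_eq_abs, abs_of_nonneg ht.1]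
        have := norm_nonneg v
        nlinarith [ht.1, ht.2]
    have hT := map_add_eq_sum_add_integral_iteratedFDeriv (n := n) (f := K) (x := θ) (y := v)
      (fun t ht => hcd (hS0 _ (hmem t ht)))
    have hKw : K (w + h) = (ρ ^ d)⁻¹ * K (θ + v) := by
      rw [← kernel_homog hΩ hK ρ hn]
      congr 1
      rw [hθ, hv, smul_add, smul_smul, smul_smul, mul_inv_cancel₀ hn.ne', one_smul, one_smul]
    have hsum : ∑ k ∈ Finset.range (n + 1), ∑ σ : Fin k → Fin d, a k σ w * ∏ i, h (σ i)
        = (ρ ^ d)⁻¹ * ∑ k ∈ Finset.range (n + 1),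
          ((k.factorial : ℝ)⁻¹ • (iteratedFDeriv ℝ k K θ (fun _ ↦ v))) := by
      rw [Finset.mul_sum]
      refine Finset.sum_congr rfl fun k _ => ?_
      rw [multilinear_expand, Finset.smul_sum, Finset.mul_sum]
      refine Finset.sum_congr rfl fun σ _ => ?_
      have hp : ∏ i, v (σ i) = (ρ ^ k)⁻¹ * ∏ i, h (σ i) := by
        simp only [hv, PiLp.smul_apply, smul_eq_mul]
        rw [Finset.prod_mul_distrib]
        simp
      simp only [a]
      rw [hp, ← hρ, ← hθ, pow_add, mul_inv, smul_eq_mul]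
      ring
    rw [hsum, hKw, hT, mul_add, add_sub_cancel_left]
    have hint : ‖∫ t in (0:ℝ)..1, (1 - t)^n • iteratedFDeriv ℝ (n + 1) K (θ + t • v) (fun _ ↦ v)‖
        ≤ (max M 1 * ‖v‖ ^ (n + 1)) * |1 - 0| := by
      apply intervalIntegral.norm_integral_le_of_norm_le_const
      intro t ht
      rw [uIoc_of_le zero_le_one] at ht
      rw [norm_smul]
      have h1 : ‖(1 - t) ^ n‖ ≤ 1 := by
        rw [norm_pow, Real.norm_eq_abs]
        apply pow_le_one₀ (abs_nonneg _)
        rw [abs_le]; constructor <;> linarith [ht.1, ht.2]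
      have h2 := (iteratedFDeriv ℝ (n + 1) K (θ + t • v)).le_opNorm (fun _ ↦ v)
      have h3 := hM _ (hmem t ⟨ht.1.le, ht.2⟩)
      simp only [Finset.prod_const, Finset.card_univ, Fintype.card_fin] at h2
      calc _ ≤ 1 * (max M 1 * ‖v‖ ^ (n + 1)) := by
            refine mul_le_mul h1 (h2.trans ?_) (norm_nonneg _) zero_le_one
            gcongr
            exact h3.trans (le_max_left _ _)
        _ = _ := one_mul _
    rw [sub_zero, abs_one, mul_one, Real.norm_eq_abs] at hint
    rw [abs_mul, abs_of_nonneg (by positivity : 0 ≤ (ρ ^ d)⁻¹), smul_eq_mul, abs_mul,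
      abs_of_nonneg (by positivity : 0 ≤ (n.factorial : ℝ)⁻¹)]
    have hf : ((n.factorial : ℝ)⁻¹) ≤ 1 := by
      apply inv_le_one_of_one_le₀
      exact_mod_cast Nat.succ_le_of_lt n.factorial_pos
    calc _ ≤ (ρ ^ d)⁻¹ * (1 * (max M 1 * ‖v‖ ^ (n + 1))) := by gcongr
      _ = _ := by
        rw [hvn, div_pow, add_assoc d n 1, pow_add ρ d (n+1)]
        field_simp

/-! ### The interior cone condition -/

lemma cone_condition {d : ℕ} {D : Set (EuclideanSpace ℝ (Fin d))} (hD : IsLipschitzDomain D) :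
    ∃ κ T s : ℝ, 0 < κ ∧ κ ≤ 1 ∧ 0 < T ∧ 0 < s ∧ ∀ x ∈ D, ∀ u ∈ D, dist x u < s →
      ∃ e : EuclideanSpace ℝ (Fin d), ‖e‖ ≤ 1 ∧ ∀ t, 0 < t → t ≤ T →
        cube (x + t • e) (κ * t) ⊆ D ∧ cube (u + t • e) (κ * t) ⊆ D := by
  obtain ⟨hop, -, -, δ, R, hδ, hR, hch⟩ := hD
  set κ : ℝ := 1 / (2 * ((d : ℝ) + 1) * (1 + δ)) with hκ
  have hd0 : (0:ℝ) ≤ d := Nat.cast_nonneg d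
  have hκ0 : 0 < κ := by positivity
  have hκd : (d:ℝ) * κ * (1 + δ) ≤ 1 / 2 := by
    rw [hκ, mul_one_div, div_mul_eq_mul_div, div_le_div_iff₀ (by positivity) (by norm_num)]
    nlinarith
  have hκd2 : (d:ℝ) * κ ≤ 1 / 2 := by
    have : 0 ≤ (d:ℝ) * κ := by positivity
    nlinarith
  have hκ1 : κ ≤ 1 := by
    rw [hκ, div_le_one (by positivity)]
    nlinarith
  have hcb : ∀ (z : EuclideanSpace ℝ (Fin d)) (t : ℝ), 0 < t → ∀ y ∈ cube z (κ * t),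
      dist y z ≤ d * κ * t := by
    intro z t ht y hy
    have := cube_subset_closedBall z (κ * t) (by positivity) hy
    rw [mem_closedBall] at this
    linarith
  refine ⟨κ, R / 32, R / 16, hκ0, hκ1, by positivity, by positivity, ?_⟩
  intro x hx u hu hxu
  by_cases hb : ∃ a ∈ frontier D, dist x a < R / 8
  · obtain ⟨a, ha, hxa⟩ := hb
    obtain ⟨g, j, A, hga, hA, hAj, hgD⟩ := hch a ha
    let G := g.toRealAffineIsometryEquiv
    let e : EuclideanSpace ℝ (Fin d) := G.linearIsometryEquiv.symm (EuclideanSpace.single j (1:ℝ))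
    have hG : ∀ (p : EuclideanSpace ℝ (Fin d)) (t : ℝ),
        g (p + t • e) = g p + t • EuclideanSpace.single j (1:ℝ) := by
      intro p t
      have h1 := G.map_vadd p (t • e)
      simp only [vadd_eq_add, map_smul, e, LinearIsometryEquiv.apply_symm_apply] at h1
      rw [add_comm, add_comm (g p)]
      exact h1
    have key : ∀ p ∈ D, dist p a < R / 4 → ∀ t, 0 < t → t ≤ R / 32 →
        cube (p + t • e) (κ * t) ⊆ D := by
      intro p hp hpa t ht htT y hy
      have hgp : ‖g p‖ < R / 4 := by
        have := g.dist_eq p a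
        rw [hga, dist_zero_right] at this
        rw [this]; exact hpa
      have hpm : g p ∈ g '' D ∩ cube 0 R := by
        refine ⟨mem_image_of_mem _ hp, fun i => ?_⟩
        have := abs_coord_le (g p) i
        simp only [PiLp.zero_apply, sub_zero]
        linarith
      rw [hgD] at hpm
      have hAp : A (g p) < g p j := hpm.2
      have hdy : dist (g y) (g p + t • EuclideanSpace.single j (1:ℝ)) ≤ d * κ * t := by
        rw [← hG, g.dist_eq]
        exact hcb _ _ ht y hy
      have hA1 : A (g p + t • EuclideanSpace.single j (1:ℝ)) = A (g p) := by
        apply hAj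
        intro i hi
        simp [hi]
      have hA2 : A (g y) ≤ A (g p) + δ * (d * κ * t) := by
        have h1 := hA.dist_le_mul (g y) (g p + t • EuclideanSpace.single j (1:ℝ))
        rw [hA1, Real.dist_eq, Real.coe_toNNReal δ hδ.le] at h1
        have h2 := le_abs_self (A (g y) - A (g p))
        have h3 := mul_le_mul_of_nonneg_left hdy hδ.le
        linarith
      have hco : ∀ i, |(g y) i - (g p + t • EuclideanSpace.single j (1:ℝ)) i| ≤ d * κ * t := by
        intro i
        have := abs_coord_le (g y - (g p + t • EuclideanSpace.single j (1:ℝ))) i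
        rw [← dist_eq_norm] at this
        exact this.trans hdy
      have hj : g p j + t - d * κ * t ≤ (g y) j := by
        have := (abs_le.1 (hco j)).1
        simp at this
        linarith
      have hmem : g y ∈ {x ∈ cube (0 : EuclideanSpace ℝ (Fin d)) R | A x < x j} := by
        constructor
        · intro i
          simp only [PiLp.zero_apply, sub_zero]
          have h1 := hco i
          have h2 := abs_coord_le (g p + t • EuclideanSpace.single j (1:ℝ)) i
          have h3 : ‖g p + t • EuclideanSpace.single j (1:ℝ)‖ ≤ ‖g p‖ + t := by
            refine (norm_add_le _ _).trans ?_
            rw [norm_smul, Real.norm_eq_abs, abs_of_pos ht]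
            simp
          have h4 : |(g y) i| ≤ |(g y) i - (g p + t • EuclideanSpace.single j (1:ℝ)) i|
              + |(g p + t • EuclideanSpace.single j (1:ℝ)) i| := by
            have := abs_add_le ((g y) i - (g p + t • EuclideanSpace.single j (1:ℝ)) i)
              ((g p + t • EuclideanSpace.single j (1:ℝ)) i)
            simpa using this
          have h5 : d * κ * t ≤ 1/2 * t := by gcongr
          linarith
        · have h5 : d * κ * (1 + δ) * t ≤ 1/2 * t := by gcongr
          simp only
          nlinarith
      rw [← hgD] at hmem
      obtain ⟨y', hy', he⟩ := hmem.1
      rw [← g.injective he]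
      exact hy'
    refine ⟨e, ?_, fun t ht htT => ⟨key x hx (by linarith) t ht htT, key u hu ?_ t ht htT⟩⟩
    · simp [e]
    · have := dist_triangle_left u a x
      linarith
  · push Not at hb
    have hball : ball x (R / 8) ⊆ D := by
      have hpre : IsPreconnected (ball x (R / 8)) := (convex_ball x (R / 8)).isPreconnected
      refine hpre.subset_of_closure_inter_subset hop
        ⟨x, mem_ball_self (by positivity), hx⟩ ?_
      rintro a ⟨hac, ha⟩
      by_contra haD
      have := hb a ⟨hac, by rwa [hop.interior_eq]⟩
      rw [mem_ball, dist_comm] at ha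
      linarith
    have key : ∀ p, dist x p < R / 16 → ∀ t, 0 < t → t ≤ R / 32 →
        cube (p + t • (0 : EuclideanSpace ℝ (Fin d))) (κ * t) ⊆ D := by
      intro p hp t ht htT y hy
      apply hball
      have h1 := hcb _ _ ht y hy
      rw [smul_zero, add_zero] at h1
      have h5 : d * κ * t ≤ 1/2 * t := by gcongr
      rw [mem_ball]
      have := dist_triangle y p x
      rw [dist_comm p x] at this
      linarith
    exact ⟨0, by simp, fun t ht htT => ⟨key x (by rw [dist_self]; positivity) t ht htT,
      key u hxu t ht htT⟩⟩

/-! ### Comparison of approximating polynomials along cones -/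

/-- The constant property of `poly_norm`. -/
def PolyNormConst (d n : ℕ) (A : ℝ) : Prop := 1 ≤ A ∧ ∀ P ∈ PolyLE d n,
    ∀ (z x : EuclideanSpace ℝ (Fin d)) (l R : ℝ), 0 < l → l ≤ R → (∀ i, |x i - z i| ≤ R) →
      |P x| ≤ A * (R / l) ^ n * ((l ^ d)⁻¹ * ∫ y in cube z l, |P y|)

lemma poly_integrableOn_cube {d n : ℕ} {P : EuclideanSpace ℝ (Fin d) → ℝ} (hP : P ∈ PolyLE d n)
    (z : EuclideanSpace ℝ (Fin d)) (l : ℝ) (hl : 0 ≤ l) : IntegrableOn P (cube z l) :=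
  (polyLE_continuous hP).continuousOn.integrableOn_compact (cube_isCompact z l hl)

lemma poly_compare {d n : ℕ} {A : ℝ} (hA : PolyNormConst d n A)
    {D : Set (EuclideanSpace ℝ (Fin d))} {f : EuclideanSpace ℝ (Fin d) → ℝ}
    (hf : IntegrableOn f D) {P₁ P₂ : EuclideanSpace ℝ (Fin d) → ℝ}
    (hP₁ : P₁ ∈ PolyLE d n) (hP₂ : P₂ ∈ PolyLE d n)
    {z z₁ z₂ v : EuclideanSpace ℝ (Fin d)} {l t₁ t₂ R E₁ E₂ : ℝ} (hl : 0 < l)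
    (ht₁ : 0 < t₁) (ht₂ : 0 < t₂)
    (h₁ : cube z l ⊆ cube z₁ t₁) (h₂ : cube z l ⊆ cube z₂ t₂)
    (hD₁ : cube z₁ t₁ ⊆ D) (hD₂ : cube z₂ t₂ ⊆ D)
    (hE₁ : ∫ y in cube z₁ t₁, |f y - P₁ y| ≤ E₁) (hE₂ : ∫ y in cube z₂ t₂, |f y - P₂ y| ≤ E₂)
    (hlR : l ≤ R) (hv : ∀ i, |v i - z i| ≤ R) :
    |P₁ v - P₂ v| ≤ A * (R / l) ^ n * ((l ^ d)⁻¹ * (E₁ + E₂)) := by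
  have hA0 : 0 ≤ A := by linarith [hA.1]
  have hR : 0 < R := by linarith
  have key := hA.2 _ (polyLE_sub hP₁ hP₂) z v l R hl hlR hv
  refine key.trans ?_
  have i1 : IntegrableOn (fun y => |f y - P₁ y|) (cube z₁ t₁) :=
    ((hf.mono_set hD₁).sub (poly_integrableOn_cube hP₁ z₁ t₁ ht₁.le)).abs
  have i2 : IntegrableOn (fun y => |f y - P₂ y|) (cube z₂ t₂) :=
    ((hf.mono_set hD₂).sub (poly_integrableOn_cube hP₂ z₂ t₂ ht₂.le)).abs
  have : ∫ y in cube z l, |P₁ y - P₂ y| ≤ E₁ + E₂ := by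
    calc ∫ y in cube z l, |P₁ y - P₂ y|
        ≤ ∫ y in cube z l, (|f y - P₁ y| + |f y - P₂ y|) := by
          apply integral_mono_of_nonneg (ae_of_all _ fun _ => abs_nonneg _)
            ((i1.mono_set h₁).add (i2.mono_set h₂))
          refine ae_of_all _ fun y => ?_
          have := abs_sub (f y - P₂ y) (f y - P₁ y)
          have e : P₁ y - P₂ y = (f y - P₂ y) - (f y - P₁ y) := by ring
          simp only [Pi.add_apply]
          rw [e]; linarith
      _ = (∫ y in cube z l, |f y - P₁ y|) + ∫ y in cube z l, |f y - P₂ y| :=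
          integral_add (i1.mono_set h₁) (i2.mono_set h₂)
      _ ≤ E₁ + E₂ := by
          refine add_le_add (le_trans ?_ hE₁) (le_trans ?_ hE₂)
          · exact setIntegral_mono_set i1 (ae_of_all _ fun _ => abs_nonneg _) h₁.eventuallyLE
          · exact setIntegral_mono_set i2 (ae_of_all _ fun _ => abs_nonneg _) h₂.eventuallyLE
  gcongr

/-- Analytic data on the modulus of continuity. -/
structure ModData (ω : ℝ → ℝ) (n : ℕ) (q r Cq Cr : ℝ) : Prop where
  mono : ∀ s t, 0 ≤ s → s ≤ t → ω s ≤ ω t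
  nonneg : ∀ t, 0 ≤ t → 0 ≤ ω t
  lim : Tendsto ω (𝓝[>] 0) (𝓝 0)
  hnq : (n:ℝ) < q
  hqn : q < n + 1
  hr : 0 < r
  hCq : 1 ≤ Cq
  hCr : 1 ≤ Cr
  up : ∀ l t, 0 < l → l ≤ t → ω t ≤ Cq * (t / l) ^ q * ω l
  down : ∀ s t, 0 < s → s ≤ 1 → 0 < t → ω (s * t) ≤ Cr * s ^ r * ω t

lemma modData_exists {ω : ℝ → ℝ} {n : ℕ} (hω : IsModulusOfOrder ω n) :
    ∃ q r Cq Cr, ModData ω n q r Cq Cr := by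
  obtain ⟨⟨q, hq1, hq2, C, hC, hup⟩, r, hr1, hr2, C', hC', hdn⟩ := hω.conds
  refine ⟨(q + n + 1) / 2, r, max C 1, max C' 1, ?_, hω.nonneg, ?_, by linarith, by linarith, ?_,
    le_max_right _ _, le_max_right _ _, ?_, ?_⟩
  · intro s t hs hst
    exact hω.monotoneOn hs (hs.trans hst) hst
  · have := (hω.continuousOn 0 self_mem_Ici).tendsto
    rw [hω.map_zero] at this
    exact this.mono_left (nhdsWithin_mono _ Ioi_subset_Ici_self)
  · have : (1:ℝ) ≤ n := by exact_mod_cast hω.npos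
    linarith
  · intro l t hl hlt
    have hn := hω.nonneg l hl.le
    rcases hlt.eq_or_lt with rfl | hlt
    · rw [div_self hl.ne', Real.one_rpow, mul_one]
      nlinarith [le_max_right C 1]
    · have h1 : 1 < t / l := by rwa [one_lt_div hl]
      have h2 := hup (t / l) l h1 hl
      rw [div_mul_cancel₀ _ hl.ne'] at h2
      refine h2.trans ?_
      have h3 : (t / l) ^ q ≤ (t / l) ^ ((q + n + 1) / 2) :=
        Real.rpow_le_rpow_of_exponent_le h1.le (by linarith)
      have : 0 ≤ (t/l) ^ q := by positivity
      gcongr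
      exact le_max_left _ _
  · intro s t hs hs1 ht
    have hn := hω.nonneg t ht.le
    rcases hs1.eq_or_lt with rfl | hs1
    · rw [Real.one_rpow, mul_one, one_mul]
      nlinarith [le_max_right C' 1]
    · refine (hdn s t hs hs1 ht).trans ?_
      have : 0 ≤ s ^ r := by positivity
      gcongr
      exact le_max_left _ _

/-- A family of near best polynomials along a cone with vertex `x`. -/
structure ConeChain {d : ℕ} (ω : ℝ → ℝ) (n : ℕ) (D : Set (EuclideanSpace ℝ (Fin d)))
    (f : EuclideanSpace ℝ (Fin d) → ℝ) (M κ T : ℝ) (x e : EuclideanSpace ℝ (Fin d))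
    (Pc : ℝ → EuclideanSpace ℝ (Fin d) → ℝ) : Prop where
  he : ‖e‖ ≤ 1
  sub : ∀ t, 0 < t → t ≤ T → cube (x + t • e) (κ * t) ⊆ D
  poly : ∀ t, 0 < t → t ≤ T → Pc t ∈ PolyLE d n
  bd : ∀ t, 0 < t → t ≤ T →
    ∫ y in cube (x + t • e) (κ * t), |f y - Pc t y| ≤ M * ω t * (κ * t) ^ d

lemma coneChain_mono {d : ℕ} {ω : ℝ → ℝ} {n : ℕ} {D : Set (EuclideanSpace ℝ (Fin d))}
    {f : EuclideanSpace ℝ (Fin d) → ℝ} {M κ T T' : ℝ} {x e : EuclideanSpace ℝ (Fin d)}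
    {Pc : ℝ → EuclideanSpace ℝ (Fin d) → ℝ} (h : ConeChain ω n D f M κ T x e Pc)
    (hT : T' ≤ T) : ConeChain ω n D f M κ T' x e Pc :=
  ⟨h.he, fun t h0 h1 => h.sub t h0 (h1.trans hT), fun t h0 h1 => h.poly t h0 (h1.trans hT),
    fun t h0 h1 => h.bd t h0 (h1.trans hT)⟩

lemma coord_smul_le {d : ℕ} {e : EuclideanSpace ℝ (Fin d)} (he : ‖e‖ ≤ 1) (t : ℝ) (ht : 0 ≤ t)
    (i : Fin d) : |t * e i| ≤ t := by
  rw [abs_mul, abs_of_nonneg ht]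
  have := abs_coord_le e i
  nlinarith

/-- Comparison of consecutive polynomials in the chain. -/
lemma chain_step {d n : ℕ} {A : ℝ} (hA : PolyNormConst d n A) {ω : ℝ → ℝ} {q r Cq Cr : ℝ}
    (hω : ModData ω n q r Cq Cr)
    {D : Set (EuclideanSpace ℝ (Fin d))} {f : EuclideanSpace ℝ (Fin d) → ℝ}
    (hf : IntegrableOn f D) {M κ T : ℝ} (hM : 0 ≤ M) (hκ : 0 < κ) (hκ1 : κ ≤ 1)
    {x e : EuclideanSpace ℝ (Fin d)} {Pc : ℝ → EuclideanSpace ℝ (Fin d) → ℝ}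
    (hc : ConeChain ω n D f M κ T x e Pc) {t R : ℝ} (ht : 0 < t) (htT : t ≤ T) (htR : t ≤ R)
    {v : EuclideanSpace ℝ (Fin d)} (hv : ‖v - x‖ ≤ R) :
    |Pc t v - Pc ((1 - κ / 4) * t) v| ≤
      (A * (8 / κ) ^ n * (2 * 3 ^ d)) * (R / t) ^ n * M * ω t := by
  set lam := 1 - κ / 4 with hlam
  have hl34 : 3 / 4 ≤ lam := by rw [hlam]; linarith
  have hl1 : lam ≤ 1 := by rw [hlam]; linarith
  have hlt : 0 < lam * t := by positivity
  have hltT : lam * t ≤ T := by nlinarith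
  have hωt := hω.nonneg t ht.le
  have hA0 : 0 ≤ A := by linarith [hA.1]
  have hR : 0 < R := by linarith
  have hcmp := poly_compare hA hf (hc.poly t ht htT) (hc.poly _ hlt hltT)
    (z := x + (lam * t) • e) (z₁ := x + t • e) (z₂ := x + (lam * t) • e) (v := v)
    (l := κ * (lam * t) / 2) (t₁ := κ * t) (t₂ := κ * (lam * t)) (R := 2 * R)
    (E₁ := M * ω t * (κ * t) ^ d) (E₂ := M * ω t * (κ * t) ^ d)
    (by positivity) (by positivity) (by positivity) ?_ ?_ (hc.sub t ht htT) (hc.sub _ hlt hltT)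
    (hc.bd t ht htT) ?_ ?_ ?_
  · refine hcmp.trans ?_
    have e1 : 2 * R / (κ * (lam * t) / 2) ≤ 8 / κ * (R / t) := by
      rw [div_mul_div_comm, div_le_div_iff₀ (by positivity) (by positivity)]
      have : 0 ≤ R * (κ * t) := by positivity
      nlinarith
    have e2 : ((κ * (lam * t) / 2) ^ d)⁻¹ * (M * ω t * (κ * t) ^ d + M * ω t * (κ * t) ^ d)
        ≤ (2 * 3 ^ d) * M * ω t := by
      have e3 : ((κ * (lam * t) / 2) ^ d)⁻¹ * (κ * t) ^ d ≤ 3 ^ d := by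
        rw [← inv_pow, ← mul_pow]
        apply pow_le_pow_left₀ (by positivity)
        rw [inv_mul_le_iff₀ (by positivity)]
        have : 0 < κ * t := by positivity
        nlinarith
      have : 0 ≤ 2 * M * ω t := by positivity
      calc _ = (((κ * (lam * t) / 2) ^ d)⁻¹ * (κ * t) ^ d) * (2 * M * ω t) := by ring
        _ ≤ 3 ^ d * (2 * M * ω t) := by gcongr
        _ = _ := by ring
    calc _ ≤ A * (8 / κ * (R / t)) ^ n * ((2 * 3 ^ d) * M * ω t) := by
          gcongr
      _ = _ := by rw [mul_pow]; ring
  · intro y hy i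
    have h1 := hy i
    have h2 := coord_smul_le hc.he ((1 - lam) * t) (by nlinarith) i
    simp only [PiLp.add_apply, PiLp.smul_apply, smul_eq_mul] at h1 ⊢
    have h3 : y i - (x i + t * e i) = (y i - (x i + lam * t * e i)) - ((1 - lam) * t * e i) := by
      ring
    rw [h3]
    refine (abs_sub _ _).trans ?_
    have h4 : (1 - lam) * t = κ * t / 4 := by rw [hlam]; ring
    rw [h4] at h2
    rw [h4]
    have : κ * (lam * t) ≤ κ * t := by nlinarith [mul_pos hκ ht]
    linarith
  · intro y hy i
    have h1 := hy i
    have : 0 < κ * (lam * t) := by positivity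
    linarith
  · refine (hc.bd _ hlt hltT).trans ?_
    have h1 : ω (lam * t) ≤ ω t := hω.mono _ _ hlt.le (by nlinarith)
    have h2 : lam * t ≤ t := by nlinarith
    gcongr
  · have h1 : lam * t ≤ t := by nlinarith
    have h2 : κ * (lam * t) ≤ t := by nlinarith
    linarith
  · intro i
    have h1 := abs_coord_le (v - x) i
    have h2 := coord_smul_le hc.he (lam * t) hlt.le i
    simp only [PiLp.add_apply, PiLp.smul_apply, PiLp.sub_apply, smul_eq_mul] at h1 ⊢
    have h3 : v i - (x i + lam * t * e i) = (v i - x i) - lam * t * e i := by ring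
    rw [h3]
    refine (abs_sub _ _).trans ?_
    have h4 : lam * t ≤ t := by nlinarith
    linarith

/-- Telescoping along the chain. -/
lemma chain_telescope {d n : ℕ} {A : ℝ} (hA : PolyNormConst d n A) {ω : ℝ → ℝ} {q r Cq Cr : ℝ}
    (hω : ModData ω n q r Cq Cr)
    {D : Set (EuclideanSpace ℝ (Fin d))} {f : EuclideanSpace ℝ (Fin d) → ℝ}
    (hf : IntegrableOn f D) {M κ T : ℝ} (hM : 0 ≤ M) (hκ : 0 < κ) (hκ1 : κ ≤ 1)
    {x e : EuclideanSpace ℝ (Fin d)} {Pc : ℝ → EuclideanSpace ℝ (Fin d) → ℝ}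
    (hc : ConeChain ω n D f M κ T x e Pc) (hT : 0 < T)
    (v : EuclideanSpace ℝ (Fin d)) (Rf : ℕ → ℝ) (k : ℕ)
    (hRf : ∀ i < k, (1 - κ / 4) ^ i * T ≤ Rf i) (hRv : ∀ i < k, ‖v - x‖ ≤ Rf i) :
    |Pc T v - Pc ((1 - κ / 4) ^ k * T) v| ≤ ∑ i ∈ Finset.range k,
      (A * (8 / κ) ^ n * (2 * 3 ^ d)) * (Rf i / ((1 - κ / 4) ^ i * T)) ^ n * M *
        ω ((1 - κ / 4) ^ i * T) := by
  have hl0 : 0 < 1 - κ / 4 := by linarith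
  have hl1 : 1 - κ / 4 ≤ 1 := by linarith
  induction k with
  | zero => simp
  | succ k ih =>
    rw [Finset.sum_range_succ]
    have h1 := ih (fun i hi => hRf i (by omega)) (fun i hi => hRv i (by omega))
    have hpk : (1 - κ / 4) ^ k ≤ 1 := pow_le_one₀ hl0.le hl1
    have hpk0 : 0 < (1 - κ / 4) ^ k := by positivity
    have h2 := chain_step hA hω hf hM hκ hκ1 hc (t := (1 - κ / 4) ^ k * T) (by positivity)
      (by nlinarith) (hRf k (by omega)) (hRv k (by omega))
    rw [← mul_assoc, ← pow_succ'] at h2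
    calc _ ≤ |Pc T v - Pc ((1 - κ / 4) ^ k * T) v|
        + |Pc ((1 - κ / 4) ^ k * T) v - Pc ((1 - κ / 4) ^ (k+1) * T) v| := by
          have := abs_add_le (Pc T v - Pc ((1 - κ / 4) ^ k * T) v)
            (Pc ((1 - κ / 4) ^ k * T) v - Pc ((1 - κ / 4) ^ (k+1) * T) v)
          simpa using this
      _ ≤ _ := add_le_add h1 h2

/-- Lebesgue points, in the form we use. -/
def LebPt {d : ℕ} (D : Set (EuclideanSpace ℝ (Fin d))) (f : EuclideanSpace ℝ (Fin d) → ℝ)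
    (u : EuclideanSpace ℝ (Fin d)) : Prop :=
  Tendsto (fun t : ℝ => (t ^ d)⁻¹ * ∫ y in closedBall u (((d:ℝ) + 1) * t) ∩ D, |f y - f u|)
    (𝓝[>] 0) (𝓝 0)

lemma ae_lebPt {d : ℕ} {D : Set (EuclideanSpace ℝ (Fin d))} (hD : IsOpen D)
    {f : EuclideanSpace ℝ (Fin d) → ℝ}
    (hf : IntegrableOn f D) : ∀ᵐ u, u ∈ D → LebPt D f u := by
  have hF : Integrable (D.indicator f) := hf.integrable_indicator hD.measurableSet
  filter_upwards [IsUnifLocDoublingMeasure.ae_tendsto_average_norm_sub volume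
    hF.locallyIntegrable 1] with u hu huD
  have h1 := hu (l := 𝓝[>] (0:ℝ)) (fun _ => u) (fun t => ((d:ℝ) + 1) * t) (by
    apply tendsto_nhdsWithin_iff.2 ⟨?_, ?_⟩
    · have : Tendsto (fun t : ℝ => ((d:ℝ) + 1) * t) (𝓝 0) (𝓝 (((d:ℝ) + 1) * 0)) :=
        tendsto_id.const_mul _
      rw [mul_zero] at this
      exact this.mono_left nhdsWithin_le_nhds
    · filter_upwards [self_mem_nhdsWithin] with t ht
      have : (0:ℝ) < t := ht
      exact mem_Ioi.2 (by positivity)) (by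
    filter_upwards [self_mem_nhdsWithin] with t ht
    have : (0:ℝ) < t := ht
    exact mem_closedBall_self (by positivity))
  set c : ℝ := volume.real (ball (0 : EuclideanSpace ℝ (Fin d)) 1) with hcdef
  have hcpos : 0 < c := by
    apply ENNReal.toReal_pos
    · exact (measure_ball_pos volume 0 one_pos).ne'
    · exact measure_ball_lt_top.ne
  have h2 := h1.const_mul (((d:ℝ) + 1) ^ d * c)
  rw [mul_zero] at h2
  refine squeeze_zero' ?_ ?_ h2
  · filter_upwards [self_mem_nhdsWithin] with t ht
    have : (0:ℝ) < t := ht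
    have : 0 ≤ ∫ y in closedBall u (((d:ℝ) + 1) * t) ∩ D, |f y - f u| :=
      integral_nonneg fun _ => abs_nonneg _
    positivity
  · filter_upwards [self_mem_nhdsWithin] with t ht
    have ht : (0:ℝ) < t := ht
    have hv : volume.real (closedBall u (((d:ℝ) + 1) * t)) = (((d:ℝ) + 1) * t) ^ d * c := by
      have := Measure.addHaar_real_closedBall (volume : Measure (EuclideanSpace ℝ (Fin d))) u
        (r := ((d:ℝ) + 1) * t) (by positivity)
      rw [this, finrank_euclideanSpace, Fintype.card_fin, hcdef]
    rw [setAverage_eq, hv, smul_eq_mul, mul_pow]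
    have e : ((d:ℝ) + 1) ^ d * c * (((((d:ℝ) + 1) ^ d * t ^ d) * c)⁻¹ *
        ∫ y in closedBall u (((d:ℝ) + 1) * t), ‖D.indicator f y - D.indicator f u‖)
        = (t ^ d)⁻¹ * ∫ y in closedBall u (((d:ℝ) + 1) * t),
          ‖D.indicator f y - D.indicator f u‖ := by
      field_simp
    rw [e]
    have hint : IntegrableOn (fun y => ‖D.indicator f y - D.indicator f u‖)
        (closedBall u (((d:ℝ) + 1) * t)) := by
      apply Integrable.norm
      apply Integrable.sub hF.integrableOn
      exact integrableOn_const measure_closedBall_lt_top.ne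
    gcongr
    calc ∫ y in closedBall u (((d:ℝ) + 1) * t) ∩ D, |f y - f u|
        = ∫ y in closedBall u (((d:ℝ) + 1) * t) ∩ D, ‖D.indicator f y - D.indicator f u‖ := by
          apply setIntegral_congr_fun (measurableSet_closedBall.inter hD.measurableSet)
          intro y hy
          simp [hy.2, huD]
      _ ≤ _ := setIntegral_mono_set hint (ae_of_all _ fun _ => norm_nonneg _)
          inter_subset_left.eventuallyLE

/-! ### Pointwise bound and climbing -/

lemma geom_partial_le {a : ℝ} (h0 : 0 ≤ a) (h1 : a < 1) (k : ℕ) :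
    ∑ i ∈ Finset.range k, a ^ i ≤ (1 - a)⁻¹ := by
  rw [← tsum_geometric_of_lt_one h0 h1]
  exact (summable_geometric_of_lt_one h0 h1).sum_le_tsum _ (fun i _ => by positivity)

lemma cone_cube_subset_ball {d : ℕ} {u e : EuclideanSpace ℝ (Fin d)} (he : ‖e‖ ≤ 1) {κ t : ℝ}
    (hκ : 0 < κ) (hκ1 : κ ≤ 1) (ht : 0 < t) :
    cube (u + t • e) (κ * t) ⊆ closedBall u (((d:ℝ) + 1) * t) := by
  intro y hy
  have h1 := cube_subset_closedBall (u + t • e) (κ * t) (by positivity) hy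
  rw [mem_closedBall] at h1 ⊢
  have h2 : dist (u + t • e) u ≤ t := by
    rw [dist_eq_norm, add_sub_cancel_left, norm_smul, Real.norm_of_nonneg ht.le]
    nlinarith
  have h3 := dist_triangle y (u + t • e) u
  have h4 : (d:ℝ) * (κ * t) ≤ d * t := by
    gcongr
    nlinarith
  linarith

lemma pointwise_bound {d n : ℕ} {A : ℝ} (hA : PolyNormConst d n A) {ω : ℝ → ℝ} {q r Cq Cr : ℝ}
    (hω : ModData ω n q r Cq Cr)
    {D : Set (EuclideanSpace ℝ (Fin d))} {f : EuclideanSpace ℝ (Fin d) → ℝ}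
    (hf : IntegrableOn f D) {M κ T : ℝ} (hM : 0 ≤ M) (hκ : 0 < κ) (hκ1 : κ ≤ 1)
    {u e : EuclideanSpace ℝ (Fin d)} {Pc : ℝ → EuclideanSpace ℝ (Fin d) → ℝ}
    (hc : ConeChain ω n D f M κ T u e Pc) (hT : 0 < T) (hu : LebPt D f u) :
    |f u - Pc T u| ≤
      (A * (8 / κ) ^ n * (2 * 3 ^ d)) * (Cr * (1 - (1 - κ / 4) ^ r)⁻¹) * M * ω T := by
  have hA0 : 0 ≤ A := by linarith [hA.1]
  have hCr : 0 ≤ Cr := by linarith [hω.hCr]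
  set lam := 1 - κ / 4 with hlam
  have hl0 : 0 < lam := by rw [hlam]; linarith
  have hl1 : lam < 1 := by rw [hlam]; linarith
  set A2 := A * (8 / κ) ^ n * (2 * 3 ^ d) with hA2
  have hA20 : 0 ≤ A2 := by positivity
  have hlr0 : 0 ≤ lam ^ r := by positivity
  have hlr1 : lam ^ r < 1 := Real.rpow_lt_one hl0.le hl1 hω.hr
  have hωT := hω.nonneg T hT.le
  have htele : ∀ k : ℕ, |Pc T u - Pc (lam ^ k * T) u| ≤ A2 * (Cr * (1 - lam ^ r)⁻¹) * M * ω T := by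
    intro k
    refine (chain_telescope hA hω hf hM hκ hκ1 hc hT u (fun i => lam ^ i * T) k
      (fun i _ => le_rfl) (fun i _ => by simp only [sub_self, norm_zero]; positivity)).trans ?_
    calc _ ≤ ∑ i ∈ Finset.range k, (A2 * M * Cr * ω T) * (lam ^ r) ^ i := by
          apply Finset.sum_le_sum
          intro i _
          have hp : 0 < lam ^ i := by positivity
          have hp1 : lam ^ i ≤ 1 := pow_le_one₀ hl0.le hl1.le
          rw [div_self (by positivity), one_pow, mul_one]
          have h := hω.down (lam ^ i) T hp hp1 hT
          have e : (lam ^ i) ^ r = (lam ^ r) ^ i := by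
            rw [← Real.rpow_natCast, ← Real.rpow_natCast, ← Real.rpow_mul hl0.le,
              ← Real.rpow_mul hl0.le, mul_comm]
          rw [e] at h
          calc _ ≤ A2 * M * (Cr * (lam ^ r) ^ i * ω T) := by gcongr
            _ = _ := by ring
      _ = (A2 * M * Cr * ω T) * ∑ i ∈ Finset.range k, (lam ^ r) ^ i := by rw [Finset.mul_sum]
      _ ≤ (A2 * M * Cr * ω T) * (1 - lam ^ r)⁻¹ := by
          gcongr
          exact geom_partial_le hlr0 hlr1 k
      _ = _ := by ring
  have hlimt : Tendsto (fun t => Pc t u) (𝓝[>] 0) (𝓝 (f u)) := by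
    rw [tendsto_iff_norm_sub_tendsto_zero]
    have hup : Tendsto (fun t : ℝ => A * (1 / κ) ^ n * (M * ω t + (κ ^ d)⁻¹ *
        ((t ^ d)⁻¹ * ∫ y in closedBall u (((d:ℝ) + 1) * t) ∩ D, |f y - f u|))) (𝓝[>] 0)
        (𝓝 (A * (1 / κ) ^ n * (M * 0 + (κ ^ d)⁻¹ * 0))) :=
      ((hω.lim.const_mul M).add (hu.const_mul _)).const_mul _
    simp only [mul_zero, add_zero] at hup
    refine squeeze_zero' (Eventually.of_forall fun _ => norm_nonneg _) ?_ hup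
    filter_upwards [Ioc_mem_nhdsGT hT] with t ht
    have ht0 := ht.1
    have hsub := hc.sub t ht.1 ht.2
    have hball := cone_cube_subset_ball (u := u) hc.he hκ hκ1 ht.1
    have hfi : IntegrableOn (fun y => |f y - f u|) (closedBall u (((d:ℝ) + 1) * t) ∩ D) := by
      apply Integrable.abs
      apply Integrable.sub (hf.mono_set inter_subset_right)
      exact integrableOn_const ((measure_mono inter_subset_left).trans_lt
        measure_closedBall_lt_top).ne
    have h := poly_compare hA hf (hc.poly t ht.1 ht.2) (polyLE_const (f u))
      (z := u + t • e) (z₁ := u + t • e) (z₂ := u + t • e) (v := u) (l := κ * t) (t₁ := κ * t)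
      (t₂ := κ * t) (R := t) (E₁ := M * ω t * (κ * t) ^ d)
      (E₂ := ∫ y in closedBall u (((d:ℝ) + 1) * t) ∩ D, |f y - f u|)
      (by positivity) (by positivity) (by positivity) subset_rfl subset_rfl hsub hsub
      (hc.bd t ht.1 ht.2)
      (setIntegral_mono_set hfi (ae_of_all _ fun _ => abs_nonneg _)
        (subset_inter hball hsub).eventuallyLE)
      (by nlinarith) (by
        intro i
        have := coord_smul_le hc.he t ht0.le i
        simp only [PiLp.add_apply, PiLp.smul_apply, smul_eq_mul]
        rwa [sub_add_cancel_left, abs_neg])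
    rw [Real.norm_eq_abs]
    refine h.trans (le_of_eq ?_)
    have e1 : t / (κ * t) = 1 / κ := by field_simp
    rw [e1, mul_pow]
    field_simp
  have hseq : Tendsto (fun k : ℕ => lam ^ k * T) atTop (𝓝[>] 0) := by
    apply tendsto_nhdsWithin_iff.2 ⟨?_, Eventually.of_forall fun k => mem_Ioi.2 (by positivity)⟩
    have := (tendsto_pow_atTop_nhds_zero_of_lt_one hl0.le hl1).mul_const T
    rwa [zero_mul] at this
  have hfin : Tendsto (fun k : ℕ => |Pc T u - Pc (lam ^ k * T) u|) atTop (𝓝 |Pc T u - f u|) :=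
    ((hlimt.comp hseq).const_sub _).abs
  rw [abs_sub_comm]
  exact le_of_tendsto hfin (Eventually.of_forall htele)

set_option maxHeartbeats 1000000 in
lemma climb {d n : ℕ} {A : ℝ} (hA : PolyNormConst d n A) {ω : ℝ → ℝ} {q r Cq Cr : ℝ}
    (hω : ModData ω n q r Cq Cr)
    {D : Set (EuclideanSpace ℝ (Fin d))} {f : EuclideanSpace ℝ (Fin d) → ℝ}
    (hf : IntegrableOn f D) {M κ T C₀ : ℝ} (hM : 0 ≤ M) (hκ : 0 < κ) (hκ1 : κ ≤ 1) (hC₀ : 0 ≤ C₀)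
    {x e : EuclideanSpace ℝ (Fin d)} {Pc : ℝ → EuclideanSpace ℝ (Fin d) → ℝ}
    (hc : ConeChain ω n D f M κ T x e Pc) {l R : ℝ} (hl : 0 < l) (hlT : l ≤ T) (hTR : T ≤ R)
    (hQ : cube x l ⊆ D) {P : EuclideanSpace ℝ (Fin d) → ℝ} (hP : P ∈ PolyLE d n)
    (hPb : ∫ y in cube x l, |f y - P y| ≤ C₀ * M * ω l * l ^ d)
    {v : EuclideanSpace ℝ (Fin d)} (hv : ‖v - x‖ ≤ R) :
    |P v - Pc T v| ≤
      ((A * (8 / κ) ^ n * (2 * 3 ^ d)) * Cq * 4 ^ q * (1 - (1 - κ / 4) ^ (q - n))⁻¹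
        + A * (16 / κ) ^ n * (8 / κ) ^ d * (C₀ + 1)) * (M * ω l * (T / l) ^ q * (R / T) ^ n) := by
  have hT : 0 < T := by linarith
  have hR : 0 < R := by linarith
  have hA0 : 0 ≤ A := by linarith [hA.1]
  have hCq : 0 ≤ Cq := by linarith [hω.hCq]
  set lam := 1 - κ / 4 with hlam
  have hl0 : 0 < lam := by rw [hlam]; linarith
  have hl34 : 3 / 4 ≤ lam := by rw [hlam]; linarith
  have hl1 : lam < 1 := by rw [hlam]; linarith
  set A2 := A * (8 / κ) ^ n * (2 * 3 ^ d) with hA2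
  have hA20 : 0 ≤ A2 := by positivity
  have hωl := hω.nonneg l hl.le
  have hb0 : 0 ≤ lam ^ (q - n) := by positivity
  have hb1 : lam ^ (q - n) < 1 := Real.rpow_lt_one hl0.le hl1 (by linarith [hω.hnq])
  obtain ⟨k, hk1, hk2⟩ := exists_nat_pow_near_of_lt_one (x := l / (4 * T)) (by positivity)
    (by rw [div_le_one (by positivity)]; linarith) hl0 hl1
  rw [lt_div_iff₀ (by positivity)] at hk1
  rw [div_le_iff₀ (by positivity)] at hk2
  set t := lam ^ (k + 1) * T with ht
  have ht0 : 0 < t := by positivity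
  have ht4 : 4 * t < l := by linarith
  have ht8 : l ≤ 8 * t := by
    have : t = lam * (lam ^ k * T) := by rw [ht, pow_succ]; ring
    nlinarith
  have htT : t ≤ T := by linarith
  have h1 : |Pc T v - Pc t v| ≤
      A2 * Cq * 4 ^ q * (1 - lam ^ (q - n))⁻¹ * (M * ω l * (T / l) ^ q * (R / T) ^ n) := by
    refine (chain_telescope hA hω hf hM hκ hκ1 hc hT v (fun _ => R) (k + 1)
      (fun i _ => ?_) (fun i _ => hv)).trans ?_
    · have hp1 : lam ^ i ≤ 1 := pow_le_one₀ hl0.le hl1.le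
      rw [← hlam]
      nlinarith
    calc _ ≤ ∑ i ∈ Finset.range (k + 1),
          (A2 * Cq * 4 ^ q * (M * ω l * (T / l) ^ q * (R / T) ^ n)) * (lam ^ (q - n)) ^ i := by
          apply Finset.sum_le_sum
          intro i hi
          have hik : i ≤ k := by simpa [Nat.lt_succ_iff] using hi
          have hp : 0 < lam ^ i := by positivity
          have hpk : lam ^ k ≤ lam ^ i := pow_le_pow_of_le_one hl0.le hl1.le hik
          have hli : l ≤ 4 * (lam ^ i * T) := by nlinarith
          have w1 : ω (lam ^ i * T) ≤ Cq * (4 * (lam ^ i * T) / l) ^ q * ω l :=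
            (hω.mono _ _ (by positivity) (by nlinarith [mul_pos hp hT])).trans
              (hω.up l _ hl hli)
          have e1 : (4 * (lam ^ i * T) / l) ^ q = 4 ^ q * (T / l) ^ q * (lam ^ i) ^ q := by
            rw [show 4 * (lam ^ i * T) / l = 4 * (T / l) * lam ^ i by ring,
              Real.mul_rpow (by positivity) (by positivity), Real.mul_rpow (by positivity)
              (by positivity)]
          have e2 : (R / (lam ^ i * T)) ^ n = (R / T) ^ n * ((lam ^ i) ^ n)⁻¹ := by
            rw [← inv_pow, ← mul_pow]
            congr 1
            field_simp
          have e3 : ((lam ^ i) ^ n)⁻¹ * (lam ^ i) ^ q = (lam ^ (q - n)) ^ i := by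
            rw [← Real.rpow_natCast (lam ^ (q - n)), ← Real.rpow_mul hl0.le, mul_comm (q - n),
              Real.rpow_mul hl0.le, Real.rpow_natCast, Real.rpow_sub hp, Real.rpow_natCast]
            rw [div_eq_inv_mul]
          rw [e1] at w1
          rw [e2, ← e3]
          calc _ ≤ A2 * ((R / T) ^ n * ((lam ^ i) ^ n)⁻¹) * M *
                (Cq * (4 ^ q * (T / l) ^ q * (lam ^ i) ^ q) * ω l) := by gcongr
            _ = _ := by ring
      _ = (A2 * Cq * 4 ^ q * (M * ω l * (T / l) ^ q * (R / T) ^ n)) *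
          ∑ i ∈ Finset.range (k + 1), (lam ^ (q - n)) ^ i := by rw [Finset.mul_sum]
      _ ≤ (A2 * Cq * 4 ^ q * (M * ω l * (T / l) ^ q * (R / T) ^ n)) * (1 - lam ^ (q - n))⁻¹ := by
          gcongr
          exact geom_partial_le hb0 hb1 _
      _ = _ := by ring
  have h2 : |P v - Pc t v| ≤ A * (16 / κ) ^ n * (8 / κ) ^ d * (C₀ + 1) *
      (M * ω l * (T / l) ^ q * (R / T) ^ n) := by
    have hcmp := poly_compare hA hf hP (hc.poly t ht0 htT)
      (z := x + t • e) (z₁ := x) (z₂ := x + t • e) (v := v) (l := κ * t) (t₁ := l) (t₂ := κ * t)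
      (R := 2 * R) (E₁ := C₀ * M * ω l * l ^ d) (E₂ := M * ω l * l ^ d)
      (by positivity) hl (by positivity) ?_ subset_rfl hQ (hc.sub t ht0 htT) hPb ?_ ?_ ?_
    · refine hcmp.trans ?_
      have e1 : 2 * R / (κ * t) ≤ 16 / κ * (R / T) * (T / l) := by
        rw [show 16 / κ * (R / T) * (T / l) = 16 * R / (κ * l) by field_simp,
          div_le_div_iff₀ (by positivity) (by positivity)]
        have : 0 < R * κ := by positivity
        nlinarith
      have e2 : ((κ * t) ^ d)⁻¹ * (C₀ * M * ω l * l ^ d + M * ω l * l ^ d)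
          ≤ (8 / κ) ^ d * (C₀ + 1) * (M * ω l) := by
        have e3 : ((κ * t) ^ d)⁻¹ * l ^ d ≤ (8 / κ) ^ d := by
          rw [← inv_pow, ← mul_pow]
          apply pow_le_pow_left₀ (by positivity)
          rw [inv_mul_le_iff₀ (by positivity)]
          field_simp
          linarith
        calc _ = (((κ * t) ^ d)⁻¹ * l ^ d) * ((C₀ + 1) * (M * ω l)) := by ring
          _ ≤ (8 / κ) ^ d * ((C₀ + 1) * (M * ω l)) := by gcongr
          _ = _ := by ring
      have e4 : (T / l) ^ n ≤ (T / l) ^ q := by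
        rw [← Real.rpow_natCast]
        apply Real.rpow_le_rpow_of_exponent_le _ hω.hnq.le
        rwa [one_le_div hl]
      calc _ ≤ A * (16 / κ * (R / T) * (T / l)) ^ n * ((8 / κ) ^ d * (C₀ + 1) * (M * ω l)) := by
            gcongr
        _ = (A * (16 / κ) ^ n * (8 / κ) ^ d * (C₀ + 1) * (M * ω l) * (R / T) ^ n) * (T / l) ^ n := by
            rw [mul_pow, mul_pow]; ring
        _ ≤ (A * (16 / κ) ^ n * (8 / κ) ^ d * (C₀ + 1) * (M * ω l) * (R / T) ^ n) * (T / l) ^ q := by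
            gcongr
        _ = _ := by ring
    · intro y hy i
      have g1 := hy i
      have g2 := coord_smul_le hc.he t ht0.le i
      simp only [PiLp.add_apply, PiLp.smul_apply, smul_eq_mul] at g1
      have g3 : y i - x i = (y i - (x i + t * e i)) + t * e i := by ring
      rw [g3]
      refine (abs_add_le _ _).trans ?_
      nlinarith
    · refine (hc.bd _ ht0 htT).trans ?_
      have g1 : ω t ≤ ω l := hω.mono _ _ ht0.le (by linarith)
      have g2 : κ * t ≤ l := by nlinarith
      gcongr
    · nlinarith
    · intro i
      have g1 := abs_coord_le (v - x) i
      have g2 := coord_smul_le hc.he t ht0.le i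
      simp only [PiLp.add_apply, PiLp.smul_apply, PiLp.sub_apply, smul_eq_mul] at g1 ⊢
      have g3 : v i - (x i + t * e i) = (v i - x i) - t * e i := by ring
      rw [g3]
      refine (abs_sub _ _).trans ?_
      linarith
  have h3 : |P v - Pc T v| ≤ |P v - Pc t v| + |Pc T v - Pc t v| := by
    have := abs_sub (P v - Pc t v) (Pc T v - Pc t v)
    simpa using this
  rw [add_mul]
  linarith

/-! ### Near and far bounds for `f - P` -/

/-- Existence of almost best polynomials with constant `M`. -/
def HasApprox {d : ℕ} (ω : ℝ → ℝ) (n : ℕ) (D : Set (EuclideanSpace ℝ (Fin d)))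
    (f : EuclideanSpace ℝ (Fin d) → ℝ) (M : ℝ) : Prop :=
  ∀ (z : EuclideanSpace ℝ (Fin d)) (t : ℝ), 0 < t → cube z t ⊆ D →
    ∃ P ∈ PolyLE d n, ∫ y in cube z t, |f y - P y| ≤ M * ω t * t ^ d

/-- The cone condition. -/
def HasCones {d : ℕ} (D : Set (EuclideanSpace ℝ (Fin d))) (κ T s : ℝ) : Prop :=
  ∀ x ∈ D, ∀ u ∈ D, dist x u < s → ∃ e : EuclideanSpace ℝ (Fin d), ‖e‖ ≤ 1 ∧
    ∀ t, 0 < t → t ≤ T → cube (x + t • e) (κ * t) ⊆ D ∧ cube (u + t • e) (κ * t) ⊆ D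

lemma chain_exists {d n : ℕ} {ω : ℝ → ℝ} {q r Cq Cr : ℝ}
    (hω : ModData ω n q r Cq Cr) {D : Set (EuclideanSpace ℝ (Fin d))}
    {f : EuclideanSpace ℝ (Fin d) → ℝ} {M κ T : ℝ} (hM : 0 ≤ M) (hκ : 0 < κ) (hκ1 : κ ≤ 1)
    (hap : HasApprox ω n D f M)
    {x e : EuclideanSpace ℝ (Fin d)} (he : ‖e‖ ≤ 1)
    (hsub : ∀ t, 0 < t → t ≤ T → cube (x + t • e) (κ * t) ⊆ D) :
    ∃ Pc, ConeChain ω n D f M κ T x e Pc := by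
  have : ∀ t, ∃ P, 0 < t → t ≤ T → P ∈ PolyLE d n ∧
      ∫ y in cube (x + t • e) (κ * t), |f y - P y| ≤ M * ω t * (κ * t) ^ d := by
    intro t
    by_cases h : 0 < t ∧ t ≤ T
    · obtain ⟨P, hP, hb⟩ := hap (x + t • e) (κ * t) (mul_pos hκ h.1) (hsub t h.1 h.2)
      refine ⟨P, fun _ _ => ⟨hP, hb.trans ?_⟩⟩
      have ht := h.1
      have : ω (κ * t) ≤ ω t := hω.mono _ _ (by positivity) (by nlinarith)
      gcongr
    · exact ⟨0, fun h1 h2 => absurd ⟨h1, h2⟩ h⟩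
  choose Pc hPc using this
  exact ⟨Pc, he, hsub, fun t h1 h2 => (hPc t h1 h2).1, fun t h1 h2 => (hPc t h1 h2).2⟩

lemma center_mem_cube {d : ℕ} (x : EuclideanSpace ℝ (Fin d)) {l : ℝ} (hl : 0 < l) :
    x ∈ cube x l := by
  intro i
  rw [sub_self, abs_zero]
  positivity

set_option maxHeartbeats 1000000 in
lemma near_bound {d n : ℕ} {ω : ℝ → ℝ} {q r Cq Cr : ℝ}
    (hω : ModData ω n q r Cq Cr) {D : Set (EuclideanSpace ℝ (Fin d))}
    {κ T s C₀ : ℝ} (hκ : 0 < κ) (hκ1 : κ ≤ 1) (hcone : HasCones D κ T s) (hC₀ : 0 ≤ C₀) :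
    ∃ A6 : ℝ, 0 ≤ A6 ∧ ∀ (f : EuclideanSpace ℝ (Fin d) → ℝ) (M : ℝ), IntegrableOn f D → 0 ≤ M →
      HasApprox ω n D f M → ∀ (x : EuclideanSpace ℝ (Fin d)) (l : ℝ), 0 < l → cube x l ⊆ D →
      ∀ P ∈ PolyLE d n, ∫ y in cube x l, |f y - P y| ≤ C₀ * M * ω l * l ^ d →
      ∀ u ∈ D, LebPt D f u → l ≤ ‖u - x‖ → ‖u - x‖ < s → 4 * ‖u - x‖ / κ ≤ T →
      |f u - P u| ≤ A6 * (M * (ω l * (‖u - x‖ / l) ^ q)) := by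
  obtain ⟨A, hA⟩ : ∃ A, PolyNormConst d n A := poly_norm d n
  have hA0 : 0 ≤ A := by linarith [hA.1]
  have hCq : 0 ≤ Cq := by linarith [hω.hCq]
  have hCr : 0 ≤ Cr := by linarith [hω.hCr]
  have hl0 : 0 < 1 - κ / 4 := by linarith
  have hl1 : 1 - κ / 4 < 1 := by linarith
  have hb1 : (1 - κ / 4) ^ (q - n) < 1 := Real.rpow_lt_one hl0.le hl1 (by linarith [hω.hnq])
  have hb2 : (1 - κ / 4) ^ r < 1 := Real.rpow_lt_one hl0.le hl1 hω.hr
  have hi1 : 0 ≤ (1 - (1 - κ / 4) ^ (q - n))⁻¹ := inv_nonneg.2 (by linarith)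
  have hi2 : 0 ≤ (1 - (1 - κ / 4) ^ r)⁻¹ := inv_nonneg.2 (by linarith)
  obtain ⟨A4, hA4⟩ : ∃ A4, A4 = ((A * (8 / κ) ^ n * (2 * 3 ^ d)) * Cq * 4 ^ q * (1 - (1 - κ / 4) ^ (q - n))⁻¹
        + A * (16 / κ) ^ n * (8 / κ) ^ d * (C₀ + 1)) := ⟨_, rfl⟩
  obtain ⟨A3, hA3⟩ : ∃ A3, A3 = (A * (8 / κ) ^ n * (2 * 3 ^ d)) * (Cr * (1 - (1 - κ / 4) ^ r)⁻¹) := ⟨_, rfl⟩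
  have hA40 : 0 ≤ A4 := by rw [hA4]; positivity
  have hA30 : 0 ≤ A3 := by rw [hA3]; positivity
  refine ⟨(A4 + A * (4 / κ) ^ n * (2 * 2 ^ d) * Cq + A3 * Cq) * (4 / κ) ^ q, by positivity, ?_⟩
  intro f M hf hM hap x l hl hQ P hP hPb u hu hLeb hlρ hρs hρT
  obtain ⟨ρ, hρ⟩ : ∃ ρ, ρ = ‖u - x‖ := ⟨_, rfl⟩
  rw [← hρ] at hlρ hρs hρT ⊢
  have hρ0 : 0 < ρ := by linarith
  obtain ⟨S, hS⟩ : ∃ S, S = 4 * ρ / κ := ⟨_, rfl⟩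
  rw [← hS] at hρT
  have hκS : κ * S = 4 * ρ := by rw [hS]; field_simp
  have hS0 : 0 < S := by rw [hS]; positivity
  have hρS : ρ ≤ S := by nlinarith
  obtain ⟨e, he, hsub⟩ := hcone x (hQ (center_mem_cube x hl)) u hu
    (by rw [dist_comm, dist_eq_norm, ← hρ]; exact hρs)
  obtain ⟨Pc, hc⟩ := chain_exists hω hM hκ hκ1 hap he (fun t h1 h2 => (hsub t h1 h2).1)
  obtain ⟨Pd, hd⟩ := chain_exists hω hM hκ hκ1 hap he (fun t h1 h2 => (hsub t h1 h2).2)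
  replace hc := coneChain_mono hc hρT
  replace hd := coneChain_mono hd hρT
  have hωl := hω.nonneg l hl.le
  have hωS := hω.nonneg S hS0.le
  have a1 := climb hA hω hf hM hκ hκ1 hC₀ hc hl (hlρ.trans hρS) le_rfl hQ hP hPb
    (v := u) (by rw [← hρ]; exact hρS)
  rw [← hA4, div_self hS0.ne', one_pow, mul_one] at a1
  have a3 := pointwise_bound hA hω hf hM hκ hκ1 hd hS0 hLeb
  rw [← hA3] at a3
  have a2 := poly_compare hA hf (hc.poly S hS0 le_rfl) (hd.poly S hS0 le_rfl)
    (z := x + S • e) (z₁ := x + S • e) (z₂ := u + S • e) (v := u) (l := κ * S / 2) (t₁ := κ * S)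
    (t₂ := κ * S) (R := 2 * S) (E₁ := M * ω S * (κ * S) ^ d) (E₂ := M * ω S * (κ * S) ^ d)
    (by positivity) (by positivity) (by positivity)
    (by
      intro y hy i
      have := hy i
      have : 0 < κ * S := by positivity
      linarith)
    (by
      intro y hy i
      have g1 := hy i
      have g2 := abs_coord_le (u - x) i
      simp only [PiLp.add_apply, PiLp.smul_apply, PiLp.sub_apply, smul_eq_mul] at g1 g2 ⊢
      have g3 : y i - (u i + S * e i) = (y i - (x i + S * e i)) - (u i - x i) := by ring
      rw [g3]
      refine (abs_sub _ _).trans ?_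
      linarith)
    (hc.sub S hS0 le_rfl) (hd.sub S hS0 le_rfl) (hc.bd S hS0 le_rfl) (hd.bd S hS0 le_rfl)
    (by nlinarith)
    (by
      intro i
      have g1 := abs_coord_le (u - x) i
      have g2 := coord_smul_le he S hS0.le i
      simp only [PiLp.add_apply, PiLp.smul_apply, PiLp.sub_apply, smul_eq_mul] at g1 ⊢
      have g3 : u i - (x i + S * e i) = (u i - x i) - S * e i := by ring
      rw [g3]
      refine (abs_sub _ _).trans ?_
      linarith)
  have a2' : |Pc S u - Pd S u| ≤ A * (4 / κ) ^ n * (2 * 2 ^ d) * (M * ω S) := by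
    refine a2.trans (le_of_eq ?_)
    have e1 : 2 * S / (κ * S / 2) = 4 / κ := by field_simp; norm_num
    have e2 : (κ * S) ^ d = 2 ^ d * (κ * S / 2) ^ d := by
      rw [← mul_pow]; congr 1; ring
    have : (κ * S / 2) ^ d ≠ 0 := by positivity
    rw [e1, e2]
    field_simp
    ring
  have hup := hω.up l S hl (hlρ.trans hρS)
  have eS : (S / l) ^ q = (4 / κ) ^ q * (ρ / l) ^ q := by
    rw [← Real.mul_rpow (by positivity) (by positivity)]
    congr 1
    rw [hS]; field_simp
  rw [eS] at hup a1
  have htri : |f u - P u| ≤ |f u - Pd S u| + |Pc S u - Pd S u| + |P u - Pc S u| := by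
    have e1 : f u - P u = (f u - Pd S u) - (Pc S u - Pd S u) * (-1) - (P u - Pc S u)
        - 2 * (Pc S u - Pd S u) + 0 := by ring
    have b1 := abs_add_le (f u - Pd S u) (Pd S u - Pc S u)
    have b2 := abs_add_le (f u - Pc S u) (Pc S u - P u)
    rw [abs_sub_comm (Pc S u), abs_sub_comm (P u)]
    have e2 : f u - Pd S u + (Pd S u - Pc S u) = f u - Pc S u := by ring
    have e3 : f u - Pc S u + (Pc S u - P u) = f u - P u := by ring
    rw [e2] at b1
    rw [e3] at b2
    linarith
  obtain ⟨W, hW⟩ : ∃ W, W = (4 / κ) ^ q * (ω l * (ρ / l) ^ q) := ⟨_, rfl⟩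
  have hup' : ω S ≤ Cq * W := by rw [hW]; linarith
  have hup2 : M * ω S ≤ M * (Cq * W) := by gcongr
  calc |f u - P u| ≤ _ := htri
    _ ≤ A3 * M * ω S + A * (4 / κ) ^ n * (2 * 2 ^ d) * (M * ω S)
        + A4 * (M * ω l * ((4 / κ) ^ q * (ρ / l) ^ q)) := by gcongr
    _ = A3 * (M * ω S) + A * (4 / κ) ^ n * (2 * 2 ^ d) * (M * ω S) + A4 * (M * W) := by
        rw [hW]; ring
    _ ≤ A3 * (M * (Cq * W)) + A * (4 / κ) ^ n * (2 * 2 ^ d) * (M * (Cq * W)) + A4 * (M * W) := by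
        gcongr
    _ = _ := by rw [hW]; ring

set_option maxHeartbeats 1000000 in
lemma far_bound {d n : ℕ} {ω : ℝ → ℝ} {q r Cq Cr : ℝ}
    (hω : ModData ω n q r Cq Cr) {D : Set (EuclideanSpace ℝ (Fin d))}
    {κ T s C₀ R : ℝ} (hκ : 0 < κ) (hκ1 : κ ≤ 1) (hT : 0 < T) (hs : 0 < s) (hcone : HasCones D κ T s)
    (hC₀ : 0 ≤ C₀) (hTR : T ≤ R) (hωR : 0 < ω R) :
    ∃ A8 : ℝ, 0 ≤ A8 ∧ ∀ (f : EuclideanSpace ℝ (Fin d) → ℝ) (M : ℝ), IntegrableOn f D → 0 ≤ M →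
      HasApprox ω n D f M → ∀ (x : EuclideanSpace ℝ (Fin d)) (l : ℝ), 0 < l → l ≤ R →
      cube x l ⊆ D →
      ∀ P ∈ PolyLE d n, ∫ y in cube x l, |f y - P y| ≤ C₀ * M * ω l * l ^ d →
      ∀ v, ‖v - x‖ ≤ R →
      |P v| ≤ A8 * ((M + ∫ y in D, |f y|) * (ω l * (R / l) ^ q)) := by
  obtain ⟨A, hA⟩ : ∃ A, PolyNormConst d n A := poly_norm d n
  have hA0 : 0 ≤ A := by linarith [hA.1]
  have hCq : 0 ≤ Cq := by linarith [hω.hCq]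
  have hR : 0 < R := by linarith
  have hl0 : 0 < 1 - κ / 4 := by linarith
  have hl1 : 1 - κ / 4 < 1 := by linarith
  have hb1 : (1 - κ / 4) ^ (q - n) < 1 := Real.rpow_lt_one hl0.le hl1 (by linarith [hω.hnq])
  have hi1 : 0 ≤ (1 - (1 - κ / 4) ^ (q - n))⁻¹ := inv_nonneg.2 (by linarith)
  obtain ⟨A4, hA4⟩ : ∃ A4, A4 = ((A * (8 / κ) ^ n * (2 * 3 ^ d)) * Cq * 4 ^ q * (1 - (1 - κ / 4) ^ (q - n))⁻¹
        + A * (16 / κ) ^ n * (8 / κ) ^ d * (C₀ + 1)) := ⟨_, rfl⟩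
  have hA40 : 0 ≤ A4 := by rw [hA4]; positivity
  obtain ⟨B1, hB1⟩ : ∃ B, B = A4 * (R / T) ^ n + A * (2 * R / (κ * T)) ^ n *
    (Cq + ((κ * T) ^ d)⁻¹ * (Cq / ω R)) := ⟨_, rfl⟩
  obtain ⟨B2, hB2⟩ : ∃ B, B = A * (R / T) ^ n * (C₀ + (T ^ d)⁻¹ * (Cq / ω R)) := ⟨_, rfl⟩
  have hB10 : 0 ≤ B1 := by rw [hB1]; positivity
  have hB20 : 0 ≤ B2 := by rw [hB2]; positivity
  refine ⟨B1 + B2, by positivity, ?_⟩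
  intro f M hf hM hap x l hl hlR hQ P hP hPb v hv
  obtain ⟨F, hF⟩ : ∃ F, F = ∫ y in D, |f y| := ⟨_, rfl⟩
  rw [← hF]
  have hF0 : 0 ≤ F := by rw [hF]; exact integral_nonneg fun _ => abs_nonneg _
  obtain ⟨W, hW⟩ : ∃ W, W = ω l * (R / l) ^ q := ⟨_, rfl⟩
  rw [← hW]
  have hωl := hω.nonneg l hl.le
  have hq0 : 0 ≤ q := le_trans (Nat.cast_nonneg n) hω.hnq.le
  have hW0 : 0 ≤ W := by rw [hW]; positivity
  have hupR : ω R ≤ Cq * W := by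
    rw [hW]; have := hω.up l R hl hlR; linarith
  have h1W : 1 ≤ Cq / ω R * W := by
    rw [div_mul_eq_mul_div, one_le_div hωR]; exact hupR
  have hFW : F ≤ Cq / ω R * W * F := by nlinarith
  have hlW : ω l ≤ W := by
    rw [hW]
    have : 1 ≤ (R / l) ^ q := Real.one_le_rpow (by rwa [one_le_div hl]) hq0
    nlinarith
  have hfabs : IntegrableOn (fun y => |f y|) D := hf.abs
  have hzero : ∀ (z : EuclideanSpace ℝ (Fin d)) (t : ℝ), cube z t ⊆ D →
      ∫ y in cube z t, |f y - (fun _ => (0:ℝ)) y| ≤ F := by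
    intro z t hz
    simp only [sub_zero]
    rw [hF]
    exact setIntegral_mono_set hfabs (ae_of_all _ fun _ => abs_nonneg _) hz.eventuallyLE
  rcases le_total l T with hlT | hTl
  · have hx := hQ (center_mem_cube x hl)
    obtain ⟨e, he, hsub⟩ := hcone x hx x hx (by rwa [dist_self])
    obtain ⟨Pc, hc⟩ := chain_exists hω hM hκ hκ1 hap he (fun t h1 h2 => (hsub t h1 h2).1)
    have a1 := climb hA hω hf hM hκ hκ1 hC₀ hc hl hlT hTR hQ hP hPb hv
    rw [← hA4] at a1
    have a2 := poly_compare hA hf (hc.poly T hT le_rfl) (polyLE_const 0)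
      (z := x + T • e) (z₁ := x + T • e) (z₂ := x + T • e) (v := v) (l := κ * T) (t₁ := κ * T)
      (t₂ := κ * T) (R := 2 * R) (E₁ := M * ω T * (κ * T) ^ d) (E₂ := F)
      (by positivity) (by positivity) (by positivity) subset_rfl subset_rfl
      (hc.sub T hT le_rfl) (hc.sub T hT le_rfl) (hc.bd T hT le_rfl)
      (hzero _ _ (hc.sub T hT le_rfl)) (by nlinarith)
      (by
        intro i
        have g1 := abs_coord_le (v - x) i
        have g2 := coord_smul_le he T hT.le i
        simp only [PiLp.add_apply, PiLp.smul_apply, PiLp.sub_apply, smul_eq_mul] at g1 ⊢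
        have g3 : v i - (x i + T * e i) = (v i - x i) - T * e i := by ring
        rw [g3]
        refine (abs_sub _ _).trans ?_
        linarith)
    rw [sub_zero] at a2
    have hωT : ω T ≤ Cq * W := (hω.mono _ _ hT.le hTR).trans hupR
    have hωTl : ω l * (T / l) ^ q ≤ W := by
      rw [hW]
      have : (T / l) ^ q ≤ (R / l) ^ q := by gcongr
      gcongr
    have e2 : ((κ * T) ^ d)⁻¹ * (M * ω T * (κ * T) ^ d + F) ≤
        M * (Cq * W) + ((κ * T) ^ d)⁻¹ * (Cq / ω R * W * F) := by
      have : (κ * T) ^ d ≠ 0 := by positivity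
      calc _ = M * ω T + ((κ * T) ^ d)⁻¹ * F := by field_simp
        _ ≤ _ := by gcongr
    have b1 : |P v| ≤ |P v - Pc T v| + |Pc T v| := by
      have := abs_add_le (P v - Pc T v) (Pc T v)
      simpa using this
    calc |P v| ≤ _ := b1
      _ ≤ A4 * (M * ω l * (T / l) ^ q * (R / T) ^ n) + A * (2 * R / (κ * T)) ^ n *
          (M * (Cq * W) + ((κ * T) ^ d)⁻¹ * (Cq / ω R * W * F)) := by
          refine add_le_add a1 (a2.trans ?_)
          gcongr
      _ = A4 * (M * (ω l * (T / l) ^ q) * (R / T) ^ n) + A * (2 * R / (κ * T)) ^ n *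
          (M * (Cq * W) + ((κ * T) ^ d)⁻¹ * (Cq / ω R * W * F)) := by ring
      _ ≤ A4 * ((M + F) * W * (R / T) ^ n) + A * (2 * R / (κ * T)) ^ n *
          ((M + F) * (Cq * W) + ((κ * T) ^ d)⁻¹ * (Cq / ω R * W * (M + F))) := by
          gcongr <;> linarith
      _ = B1 * ((M + F) * W) := by rw [hB1]; ring
      _ ≤ _ := by
          have : 0 ≤ B2 * ((M + F) * W) := by positivity
          linarith
  · have a2 := poly_compare hA hf hP (polyLE_const 0)
      (z := x) (z₁ := x) (z₂ := x) (v := v) (l := l) (t₁ := l)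
      (t₂ := l) (R := R) (E₁ := C₀ * M * ω l * l ^ d) (E₂ := F)
      hl hl hl subset_rfl subset_rfl hQ hQ hPb (hzero _ _ hQ) hlR
      (by
        intro i
        have g1 := abs_coord_le (v - x) i
        simp only [PiLp.sub_apply] at g1
        linarith)
    rw [sub_zero] at a2
    have e2 : (l ^ d)⁻¹ * (C₀ * M * ω l * l ^ d + F) ≤
        C₀ * (M * W) + (T ^ d)⁻¹ * (Cq / ω R * W * F) := by
      calc _ = C₀ * (M * ω l) + (l ^ d)⁻¹ * F := by field_simp
        _ ≤ _ := by gcongr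
    calc |P v| ≤ _ := a2
      _ ≤ A * (R / T) ^ n * (C₀ * (M * W) + (T ^ d)⁻¹ * (Cq / ω R * W * F)) := by gcongr
      _ ≤ A * (R / T) ^ n * (C₀ * ((M + F) * W) + (T ^ d)⁻¹ * (Cq / ω R * W * (M + F))) := by
          gcongr <;> linarith
      _ = B2 * ((M + F) * W) := by rw [hB2]; ring
      _ ≤ _ := by
          have : 0 ≤ B1 * ((M + F) * W) := by positivity
          linarith

/-! ### The weighted integral over the far region -/

lemma weighted_bound {d n : ℕ} {ω : ℝ → ℝ} {q r Cq Cr : ℝ}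
    (hω : ModData ω n q r Cq Cr) {D : Set (EuclideanSpace ℝ (Fin d))} (hDo : IsOpen D)
    {κ T s C₀ R : ℝ} (hκ : 0 < κ) (hκ1 : κ ≤ 1) (hT : 0 < T) (hs : 0 < s) (hcone : HasCones D κ T s)
    (hC₀ : 0 ≤ C₀) (hTR : T ≤ R) (hωR : 0 < ω R) (hDR : ∀ x ∈ D, ∀ u ∈ D, ‖u - x‖ ≤ R) :
    ∃ A9 B : ℝ, 0 ≤ A9 ∧ 0 ≤ B ∧
      ∀ (f : EuclideanSpace ℝ (Fin d) → ℝ) (M : ℝ), IntegrableOn f D → 0 ≤ M →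
      HasApprox ω n D f M → ∀ (x : EuclideanSpace ℝ (Fin d)) (l : ℝ), 0 < l → l ≤ R →
      cube x l ⊆ D →
      ∀ P ∈ PolyLE d n, ∫ y in cube x l, |f y - P y| ≤ C₀ * M * ω l * l ^ d →
      ∀ᵐ u, u ∈ D → l ≤ ‖u - x‖ → |f u - P u| * (‖u - x‖ ^ (d + n + 1))⁻¹ ≤
        A9 * ((M + ∫ y in D, |f y|) * (ω l * (‖u - x‖ / l) ^ q)) * (‖u - x‖ ^ (d + n + 1))⁻¹
          + B * |f u| := by
  obtain ⟨A6, hA6, hnear⟩ := near_bound hω hκ hκ1 hcone hC₀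
  obtain ⟨A8, hA8, hfar⟩ := far_bound hω hκ hκ1 hT hs hcone hC₀ hTR hωR
  obtain ⟨s₁, hs₁⟩ : ∃ s₁, s₁ = min s (κ * T / 4) := ⟨_, rfl⟩
  have hs0 : 0 < s₁ := by rw [hs₁]; exact lt_min hs (by positivity)
  have hR : 0 < R := by linarith
  have hq0 : 0 ≤ q := le_trans (Nat.cast_nonneg n) hω.hnq.le
  refine ⟨A6 + A8 * (R / s₁) ^ q, (s₁ ^ (d + n + 1))⁻¹, by positivity, by positivity, ?_⟩
  intro f M hf hM hap x l hl hlR hQ P hP hPb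
  filter_upwards [ae_lebPt hDo hf] with u hLeb hu hlρ
  obtain ⟨F, hF⟩ : ∃ F, F = ∫ y in D, |f y| := ⟨_, rfl⟩
  have hF0 : 0 ≤ F := by rw [hF]; exact integral_nonneg fun _ => abs_nonneg _
  have hωl := hω.nonneg l hl.le
  have hnear' := hnear f M hf hM hap x l hl hQ P hP hPb u hu (hLeb hu) hlρ
  have hfar' := hfar f M hf hM hap x l hl hlR hQ P hP hPb u (hDR x (hQ (center_mem_cube x hl)) u hu)
  rw [← hF] at hfar' ⊢
  obtain ⟨ρ, hρ⟩ : ∃ ρ, ρ = ‖u - x‖ := ⟨_, rfl⟩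
  rw [← hρ] at hlρ hnear' ⊢
  have hρ0 : 0 < ρ := by linarith
  rcases lt_or_ge ρ s₁ with h | h
  · have h1 := hnear' (h.trans_le (by rw [hs₁]; exact min_le_left _ _)) (by
      have : ρ < κ * T / 4 := h.trans_le (by rw [hs₁]; exact min_le_right _ _)
      rw [div_le_iff₀ hκ]; linarith)
    calc _ ≤ A6 * (M * (ω l * (ρ / l) ^ q)) * (ρ ^ (d + n + 1))⁻¹ := by gcongr
      _ ≤ (A6 + A8 * (R / s₁) ^ q) * ((M + F) * (ω l * (ρ / l) ^ q)) * (ρ ^ (d + n + 1))⁻¹ := by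
          gcongr
          · have : 0 ≤ A8 * (R / s₁) ^ q := by positivity
            linarith
          · linarith
      _ ≤ _ := by
          have : 0 ≤ (s₁ ^ (d + n + 1))⁻¹ * |f u| := by positivity
          linarith
  · have h1 : (R / l) ^ q ≤ (R / s₁) ^ q * (ρ / l) ^ q := by
      rw [← Real.mul_rpow (by positivity) (by positivity)]
      apply Real.rpow_le_rpow (by positivity) _ hq0
      rw [div_mul_div_comm, div_le_div_iff₀ hl (by positivity)]
      have : 0 < R * l := by positivity
      nlinarith
    have h2 : |P u| ≤ (A6 + A8 * (R / s₁) ^ q) * ((M + F) * (ω l * (ρ / l) ^ q)) := by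
      calc |P u| ≤ A8 * ((M + F) * (ω l * (R / l) ^ q)) := hfar'
        _ ≤ A8 * ((M + F) * (ω l * ((R / s₁) ^ q * (ρ / l) ^ q))) := by gcongr
        _ ≤ A8 * ((M + F) * (ω l * ((R / s₁) ^ q * (ρ / l) ^ q))) +
            A6 * ((M + F) * (ω l * (ρ / l) ^ q)) := by
            have : 0 ≤ A6 * ((M + F) * (ω l * (ρ / l) ^ q)) := by positivity
            linarith
        _ = _ := by ring
    calc _ ≤ (|P u| + |f u|) * (ρ ^ (d + n + 1))⁻¹ := by
          gcongr
          have := abs_sub (f u) (P u)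
          linarith
      _ = |P u| * (ρ ^ (d + n + 1))⁻¹ + (ρ ^ (d + n + 1))⁻¹ * |f u| := by ring
      _ ≤ _ := by gcongr

lemma scaled_integrable {d : ℕ} {G : EuclideanSpace ℝ (Fin d) → ℝ} (hG : Integrable G)
    (x : EuclideanSpace ℝ (Fin d)) {l : ℝ} (hl : 0 < l) :
    Integrable (fun u => (l ^ d)⁻¹ * G (l⁻¹ • (u - x))) ∧
      ∫ u, (l ^ d)⁻¹ * G (l⁻¹ • (u - x)) = ∫ v, G v := by
  have h1 : Integrable (fun v => G (l⁻¹ • v)) := hG.comp_smul (inv_ne_zero hl.ne')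
  refine ⟨(h1.comp_sub_right x).const_mul _, ?_⟩
  rw [integral_const_mul, integral_sub_right_eq_self (fun v => G (l⁻¹ • v)) x,
    Measure.integral_comp_inv_smul_of_nonneg _ _ hl.le, finrank_euclideanSpace, Fintype.card_fin,
    smul_eq_mul]
  field_simp

lemma far_integral {d n : ℕ} {ω : ℝ → ℝ} {q r Cq Cr : ℝ}
    (hω : ModData ω n q r Cq Cr) {D : Set (EuclideanSpace ℝ (Fin d))} (hDo : IsOpen D)
    {κ T s C₀ R : ℝ} (hκ : 0 < κ) (hκ1 : κ ≤ 1) (hT : 0 < T) (hs : 0 < s) (hcone : HasCones D κ T s)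
    (hC₀ : 0 ≤ C₀) (hTR : T ≤ R) (hωR : 0 < ω R) (hDR : ∀ x ∈ D, ∀ u ∈ D, ‖u - x‖ ≤ R) :
    ∃ C : ℝ, 0 ≤ C ∧
      ∀ (f : EuclideanSpace ℝ (Fin d) → ℝ) (M : ℝ), IntegrableOn f D → 0 ≤ M →
      HasApprox ω n D f M → ∀ (x : EuclideanSpace ℝ (Fin d)) (l : ℝ), 0 < l → l ≤ R →
      cube x l ⊆ D →
      ∀ P ∈ PolyLE d n, ∫ y in cube x l, |f y - P y| ≤ C₀ * M * ω l * l ^ d →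
      ∫ u in D \ cube x (2 * l), l ^ (n + 1) * (|f u - P u| * (‖u - x‖ ^ (d + n + 1))⁻¹) ≤
        C * ((M + ∫ y in D, |f y|) * ω l) := by
  obtain ⟨A9, B, hA9, hB, hw⟩ := weighted_bound hω hDo hκ hκ1 hT hs hcone hC₀ hTR hωR hDR
  have hR : 0 < R := by linarith
  have hCq : 0 ≤ Cq := by linarith [hω.hCq]
  obtain ⟨a, ha⟩ : ∃ a : ℝ, a = d + n + 1 - q := ⟨_, rfl⟩
  have had : (d:ℝ) < a := by rw [ha]; linarith [hω.hqn]
  obtain ⟨G, hG⟩ : ∃ G : EuclideanSpace ℝ (Fin d) → ℝ, G = fun v => (1 + ‖v‖) ^ (-a) := ⟨_, rfl⟩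
  have hGi : Integrable G := by
    rw [hG]
    apply integrable_one_add_norm
    rwa [finrank_euclideanSpace, Fintype.card_fin]
  have hG0 : ∀ v, 0 ≤ G v := by intro v; rw [hG]; positivity
  have hI0 : 0 ≤ ∫ v, G v := integral_nonneg hG0
  refine ⟨A9 * (2 ^ a * ∫ v, G v) + B * (Cq / ω R * R ^ (n + 1)), by positivity, ?_⟩
  intro f M hf hM hap x l hl hlR hQ P hP hPb
  have hae := hw f M hf hM hap x l hl hlR hQ P hP hPb
  obtain ⟨F, hF⟩ : ∃ F, F = ∫ y in D, |f y| := ⟨_, rfl⟩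
  have hF0 : 0 ≤ F := by rw [hF]; exact integral_nonneg fun _ => abs_nonneg _
  rw [← hF] at hae ⊢
  have hωl := hω.nonneg l hl.le
  obtain ⟨hSi, hSe⟩ := scaled_integrable hGi x hl
  have hfa : IntegrableOn (fun u => |f u|) (D \ cube x (2 * l)) :=
    (hf.mono_set sdiff_subset).abs
  have hms : MeasurableSet (D \ cube x (2 * l)) := hDo.measurableSet.diff (cube_measurable x _)
  have hbi : IntegrableOn (fun u => (A9 * ((M + F) * ω l) * 2 ^ a) * ((l ^ d)⁻¹ * G (l⁻¹ • (u - x)))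
      + (l ^ (n + 1) * B) * |f u|) (D \ cube x (2 * l)) :=
    (hSi.integrableOn.const_mul _).add (hfa.const_mul _)
  have hpt : ∀ᵐ u ∂(volume.restrict (D \ cube x (2 * l))),
      l ^ (n + 1) * (|f u - P u| * (‖u - x‖ ^ (d + n + 1))⁻¹) ≤
      (A9 * ((M + F) * ω l) * 2 ^ a) * ((l ^ d)⁻¹ * G (l⁻¹ • (u - x)))
      + (l ^ (n + 1) * B) * |f u| := by
    rw [ae_restrict_iff' hms]
    filter_upwards [hae] with u hu huD
    have hlρ : l ≤ ‖u - x‖ := by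
      have h := huD.2
      simp only [cube, mem_ofPred_eq, not_forall, not_le] at h
      obtain ⟨i, hi⟩ := h
      have := abs_coord_le (u - x) i
      simp only [PiLp.sub_apply] at this
      linarith
    have h1 := hu huD.1 hlρ
    have h2 : l ^ (n + 1) * ((‖u - x‖ / l) ^ q * (‖u - x‖ ^ (d + n + 1))⁻¹) ≤
        2 ^ a * ((l ^ d)⁻¹ * G (l⁻¹ • (u - x))) := by
      rw [hG]
      simp only
      rw [norm_smul, Real.norm_of_nonneg (by positivity : 0 ≤ l⁻¹)]
      obtain ⟨w, hw⟩ : ∃ w, w = l⁻¹ * ‖u - x‖ := ⟨_, rfl⟩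
      have hwρ : ‖u - x‖ = l * w := by rw [hw]; field_simp
      have hw1 : 1 ≤ w := by
        rw [hw, inv_mul_eq_div, one_le_div hl]; exact hlρ
      have hw0 : 0 < w := by linarith
      rw [← hw, hwρ, mul_div_cancel_left₀ _ hl.ne']
      have e1 : w ^ q * (w ^ (d + n + 1))⁻¹ = w ^ (-a) := by
        rw [← Real.rpow_natCast, ← Real.rpow_neg hw0.le, ← Real.rpow_add hw0, ha]
        congr 1
        push_cast
        ring
      have e2 : w ^ (-a) ≤ 2 ^ a * (1 + w) ^ (-a) := by
        have : (w:ℝ) ^ (-a) ≤ ((1 + w) / 2) ^ (-a) := by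
          apply Real.rpow_le_rpow_of_nonpos (by positivity) (by linarith)
          have : (0:ℝ) ≤ d := Nat.cast_nonneg d
          linarith
        refine this.trans (le_of_eq ?_)
        rw [Real.div_rpow (by positivity) (by positivity), Real.rpow_neg (by norm_num : (0:ℝ) ≤ 2),
          div_inv_eq_mul, mul_comm]
      calc _ = (l ^ d)⁻¹ * (w ^ q * (w ^ (d + n + 1))⁻¹) := by
            rw [mul_pow]
            have : l ^ (d + n + 1) = l ^ d * l ^ (n + 1) := by ring
            rw [this]
            field_simp
        _ ≤ (l ^ d)⁻¹ * (2 ^ a * (1 + w) ^ (-a)) := by rw [e1]; gcongr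
        _ = _ := by ring
    calc _ ≤ l ^ (n + 1) * (A9 * ((M + F) * (ω l * (‖u - x‖ / l) ^ q)) * (‖u - x‖ ^ (d + n + 1))⁻¹
          + B * |f u|) := by gcongr
      _ = (A9 * ((M + F) * ω l)) * (l ^ (n + 1) * ((‖u - x‖ / l) ^ q * (‖u - x‖ ^ (d + n + 1))⁻¹))
          + (l ^ (n + 1) * B) * |f u| := by ring
      _ ≤ (A9 * ((M + F) * ω l)) * (2 ^ a * ((l ^ d)⁻¹ * G (l⁻¹ • (u - x))))
          + (l ^ (n + 1) * B) * |f u| := by gcongr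
      _ = _ := by ring
  have hln : l ^ (n + 1) ≤ Cq / ω R * R ^ (n + 1) * ω l := by
    have hup := hω.up l R hl hlR
    have h3 : (R / l) ^ q ≤ (R / l) ^ (n + 1) := by
      rw [← Real.rpow_natCast]
      apply Real.rpow_le_rpow_of_exponent_le
      · rwa [one_le_div hl]
      · push_cast; exact hω.hqn.le
    have h4 : ω R ≤ Cq * (R / l) ^ (n + 1) * ω l := hup.trans (by gcongr)
    rw [div_pow] at h4
    rw [div_mul_eq_mul_div, div_mul_eq_mul_div, le_div_iff₀ hωR]
    have h5 : l ^ (n + 1) * ω R ≤ l ^ (n + 1) * (Cq * (R ^ (n + 1) / l ^ (n + 1)) * ω l) := by gcongr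
    refine h5.trans (le_of_eq ?_)
    field_simp
  calc _ ≤ ∫ u in D \ cube x (2 * l), ((A9 * ((M + F) * ω l) * 2 ^ a) *
        ((l ^ d)⁻¹ * G (l⁻¹ • (u - x))) + (l ^ (n + 1) * B) * |f u|) :=
        integral_mono_of_nonneg (ae_of_all _ fun _ => by positivity) hbi hpt
    _ = (A9 * ((M + F) * ω l) * 2 ^ a) * (∫ u in D \ cube x (2 * l),
        (l ^ d)⁻¹ * G (l⁻¹ • (u - x))) + (l ^ (n + 1) * B) * ∫ u in D \ cube x (2 * l), |f u| := by
        rw [integral_add (hSi.integrableOn.const_mul _) (hfa.const_mul _),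
          integral_const_mul (A9 * ((M + F) * ω l) * 2 ^ a) (fun u => (l ^ d)⁻¹ * G (l⁻¹ • (u - x))),
          integral_const_mul (l ^ (n + 1) * B)]
    _ ≤ (A9 * ((M + F) * ω l) * 2 ^ a) * (∫ v, G v) + (l ^ (n + 1) * B) * F := by
        have i1 : ∫ u in D \ cube x (2 * l), (l ^ d)⁻¹ * G (l⁻¹ • (u - x)) ≤ ∫ v, G v := by
          rw [← hSe]
          exact setIntegral_le_integral hSi (ae_of_all _ fun u => by
            have := hG0 (l⁻¹ • (u - x)); simp only [Pi.zero_apply]; positivity)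
        have i2 : ∫ u in D \ cube x (2 * l), |f u| ≤ F := by
          rw [hF]
          exact setIntegral_mono_set hf.abs (ae_of_all _ fun _ => abs_nonneg _)
            sdiff_subset.eventuallyLE
        gcongr
    _ ≤ (A9 * ((M + F) * ω l) * 2 ^ a) * (∫ v, G v) +
        (Cq / ω R * R ^ (n + 1) * ω l * B) * (M + F) := by
        gcongr
        linarith
    _ = _ := by ring

/-! ### Taylor expansion of the kernel -/

lemma kernel_integrable_aux {d : ℕ} {b : EuclideanSpace ℝ (Fin d) → ℝ}
    (hb : ContinuousOn b {x | x ≠ 0}) {S : Set (EuclideanSpace ℝ (Fin d))} (hS : MeasurableSet S)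
    (z : EuclideanSpace ℝ (Fin d)) {c R : ℝ} (hc : 0 < c)
    (hSz : ∀ u ∈ S, c ≤ ‖z - u‖ ∧ ‖z - u‖ ≤ R) {F : EuclideanSpace ℝ (Fin d) → ℝ}
    (hF : IntegrableOn F S) : IntegrableOn (fun u => b (z - u) * F u) S := by
  have hcomp : IsCompact (closedBall (0 : EuclideanSpace ℝ (Fin d)) R ∩ {w | c ≤ ‖w‖}) :=
    (isCompact_closedBall _ _).inter_right (isClosed_le continuous_const continuous_norm)
  obtain ⟨B, hB⟩ := hcomp.exists_bound_of_continuousOn (f := b) (hb.mono (by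
    rintro w ⟨_, hw⟩ rfl
    simp only [mem_ofPred_eq, norm_zero] at hw
    linarith))
  apply Integrable.bdd_mul (c := B) hF
  · apply ContinuousOn.aestronglyMeasurable _ hS
    apply hb.comp (by fun_prop)
    intro u hu h0
    have := (hSz u hu).1
    rw [h0, norm_zero] at this
    linarith
  · rw [ae_restrict_iff' hS]
    refine ae_of_all _ fun u hu => hB _ ⟨?_, (hSz u hu).1⟩
    rw [mem_closedBall_zero_iff]
    exact (hSz u hu).2

lemma far_geom {d : ℕ} {x y u : EuclideanSpace ℝ (Fin d)} {l : ℝ} (hl : 0 < l)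
    (hy : y ∈ cube x l) (hu : u ∉ cube x (2 * l)) :
    l ≤ ‖x - u‖ ∧ ‖y - x‖ ≤ d * l ∧
      ∀ t ∈ Icc (0:ℝ) 1, l / 2 ≤ ‖(x - u) + t • (y - x)‖ ∧
        (1 / (4 * ((d:ℝ) + 1))) * ‖x - u‖ ≤ ‖(x - u) + t • (y - x)‖ := by
  have h := hu
  simp only [cube, mem_ofPred_eq, not_forall, not_le] at h
  obtain ⟨i, hi⟩ := h
  have h1 : l < |x i - u i| := by rw [abs_sub_comm]; linarith
  have h2 : ‖y - x‖ ≤ d * l := by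
    have := cube_subset_closedBall x l hl.le hy
    rwa [mem_closedBall, dist_eq_norm] at this
  have h3 := abs_coord_le (x - u) i
  simp only [PiLp.sub_apply] at h3
  refine ⟨by linarith, h2, fun t ht => ?_⟩
  have h4 : l / 2 ≤ ‖(x - u) + t • (y - x)‖ := by
    have g1 := abs_coord_le ((x - u) + t • (y - x)) i
    simp only [PiLp.add_apply, PiLp.smul_apply, PiLp.sub_apply, smul_eq_mul] at g1
    have g2 : |t * (y i - x i)| ≤ l / 2 := by
      rw [abs_mul, abs_of_nonneg ht.1]
      have := hy i
      have := abs_nonneg (y i - x i)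
      nlinarith [ht.1, ht.2]
    have g3 := abs_sub_abs_le_abs_sub (x i - u i) (-(t * (y i - x i)))
    rw [abs_neg, sub_neg_eq_add] at g3
    linarith
  refine ⟨h4, ?_⟩
  rw [one_div, inv_mul_le_iff₀ (by positivity)]
  have hd : (0:ℝ) ≤ d := Nat.cast_nonneg d
  rcases le_total (2 * (d * l)) ‖x - u‖ with hc | hc
  · have g1 := norm_sub_norm_le (x - u) (-(t • (y - x)))
    rw [norm_neg, sub_neg_eq_add, norm_smul, Real.norm_of_nonneg ht.1] at g1
    have g2 : t * ‖y - x‖ ≤ d * l := by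
      have := norm_nonneg (y - x)
      nlinarith [ht.1, ht.2]
    nlinarith [norm_nonneg (x - u + t • (y - x))]
  · nlinarith

/-- Absolute convergence. -/
lemma kernel_integrable {d n : ℕ} {Ω K : EuclideanSpace ℝ (Fin d) → ℝ}
    (hΩ : IsCZDensity d ((n : ℕ∞) + 1) Ω) (hK : K = fun x => Ω x / ‖x‖ ^ d)
    {D : Set (EuclideanSpace ℝ (Fin d))} (hDo : IsOpen D) {R : ℝ}
    (hDR : ∀ x ∈ D, ∀ u ∈ D, ‖u - x‖ ≤ R) {F : EuclideanSpace ℝ (Fin d) → ℝ}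
    (hF : IntegrableOn F D) {x y : EuclideanSpace ℝ (Fin d)} {l : ℝ} (hl : 0 < l)
    (hQ : cube x l ⊆ D) (hy : y ∈ cube x l) :
    IntegrableOn (fun u => K (y - u) * F u) (D \ cube x (2 * l)) := by
  refine kernel_integrable_aux (c := l / 2) (R := R) (b := K) ?_ ?_ y ?_ ?_ ?_
  · intro w hw
    exact (kernel_contDiffAt hΩ hK hw).continuousAt.continuousWithinAt
  · exact hDo.measurableSet.diff (cube_measurable x _)
  · positivity
  · intro u hu
    obtain ⟨_, _, h⟩ := far_geom hl hy hu.2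
    have := (h 1 (by simp)).1
    rw [one_smul] at this
    refine ⟨by convert this using 2; abel, hDR u hu.1 y (hQ hy)⟩
  · exact hF.mono_set sdiff_subset

lemma poly_integrableOn_bdd {d n : ℕ} {D : Set (EuclideanSpace ℝ (Fin d))}
    (hDb : Bornology.IsBounded D) {P : EuclideanSpace ℝ (Fin d) → ℝ}
    (hP : P ∈ PolyLE d n) : IntegrableOn P D := by
  obtain ⟨r, hr⟩ := hDb.subset_closedBall 0
  exact ((polyLE_continuous hP).continuousOn.integrableOn_compact
    (isCompact_closedBall 0 r)).mono_set hr

set_option maxHeartbeats 1000000 in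
lemma main_real {d n : ℕ} {ω : ℝ → ℝ} {q r Cq Cr : ℝ}
    (hω : ModData ω n q r Cq Cr) {Ω K : EuclideanSpace ℝ (Fin d) → ℝ}
    (hΩ : IsCZDensity d ((n : ℕ∞) + 1) Ω) (hK : K = fun x => Ω x / ‖x‖ ^ d)
    {D : Set (EuclideanSpace ℝ (Fin d))} (hDo : IsOpen D) (hDb : Bornology.IsBounded D)
    {κ T s C₀ R : ℝ} (hκ : 0 < κ) (hκ1 : κ ≤ 1) (hT : 0 < T) (hs : 0 < s) (hcone : HasCones D κ T s)
    (hC₀ : 0 ≤ C₀) (hTR : T ≤ R) (hωR : 0 < ω R) (hDR : ∀ x ∈ D, ∀ u ∈ D, ‖u - x‖ ≤ R) :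
    ∃ C : ℝ, 0 ≤ C ∧
      ∀ (f : EuclideanSpace ℝ (Fin d) → ℝ), IntegrableOn f D →
      ∀ (x : EuclideanSpace ℝ (Fin d)) (l : ℝ), 0 < l → l ≤ R → cube x l ⊆ D →
      ∀ P ∈ PolyLE d n, ∃ P₃ ∈ PolyLE d n,
      ∀ M, 0 ≤ M → HasApprox ω n D f M →
      ∫ y in cube x l, |f y - P y| ≤ C₀ * M * ω l * l ^ d →
      ∀ y ∈ cube x l, |(∫ u in D \ cube x (2 * l), K (y - u) * (f u - P u)) - P₃ y| ≤
        C * ((M + ∫ y in D, |f y|) * ω l) := by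
  obtain ⟨C1, hC1, hfar⟩ := far_integral hω hDo hκ hκ1 hT hs hcone hC₀ hTR hωR hDR
  obtain ⟨a, hac, CK, hCK, htay⟩ := kernel_taylor hΩ hK (1 / (4 * ((d:ℝ) + 1))) d (by positivity)
    (by positivity)
  refine ⟨CK * d ^ (n + 1) * C1, by positivity, ?_⟩
  intro f hf x l hl hlR hQ P hP
  have hFD : IntegrableOn (fun u => f u - P u) D := hf.sub (poly_integrableOn_bdd hDb hP)
  set S := D \ cube x (2 * l) with hS
  have hSm : MeasurableSet S := hDo.measurableSet.diff (cube_measurable x _)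
  have hFS : IntegrableOn (fun u => f u - P u) S := hFD.mono_set sdiff_subset
  have hxQ := center_mem_cube x hl
  have hSx : ∀ u ∈ S, l ≤ ‖x - u‖ ∧ ‖x - u‖ ≤ R := fun u hu =>
    ⟨(far_geom hl hxQ hu.2).1, hDR u hu.1 x (hQ hxQ)⟩
  have hai : ∀ k ≤ n, ∀ σ, IntegrableOn (fun u => a k σ (x - u) * (f u - P u)) S :=
    fun k hk σ => kernel_integrable_aux (hac k hk σ) hSm x hl hSx hFS
  refine ⟨fun y => ∑ k ∈ Finset.range (n + 1), ∑ σ : Fin k → Fin d,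
    (∫ u in S, a k σ (x - u) * (f u - P u)) * ∏ i, (y (σ i) - x (σ i)), ?_, ?_⟩
  · apply polyLE_sum
    intro k hk
    apply polyLE_sum
    intro σ _
    exact polyLE_const_mul _ (polyLE_prod (by simpa [Nat.lt_succ_iff] using hk) σ x)
  intro M hM hap hPb y hy
  have hbound := hfar f M hf hM hap x l hl hlR hQ P hP hPb
  have hKi := kernel_integrable hΩ hK hDo hDR hFD hl hQ hy
  rw [← hS] at hbound hKi
  have hterm : ∀ k ∈ Finset.range (n + 1), ∀ σ : Fin k → Fin d, IntegrableOn
      (fun u => a k σ (x - u) * (f u - P u) * ∏ i, (y (σ i) - x (σ i))) S := fun k hk σ =>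
    (hai k (by simpa [Nat.lt_succ_iff] using hk) σ).mul_const _
  have e1 : (∑ k ∈ Finset.range (n + 1), ∑ σ : Fin k → Fin d,
      (∫ u in S, a k σ (x - u) * (f u - P u)) * ∏ i, (y (σ i) - x (σ i))) =
      ∫ u in S, ∑ k ∈ Finset.range (n + 1), ∑ σ : Fin k → Fin d,
        a k σ (x - u) * (f u - P u) * ∏ i, (y (σ i) - x (σ i)) := by
    rw [integral_finsetSum]
    · apply Finset.sum_congr rfl
      intro k hk
      rw [integral_finsetSum]
      · apply Finset.sum_congr rfl
        intro σ _
        rw [integral_mul_const]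
      · intro σ _
        exact hterm k hk σ
    · intro k hk
      exact integrable_finsetSum _ fun σ _ => hterm k hk σ
  have hsumi : IntegrableOn (fun u => ∑ k ∈ Finset.range (n + 1), ∑ σ : Fin k → Fin d,
        a k σ (x - u) * (f u - P u) * ∏ i, (y (σ i) - x (σ i))) S :=
    integrable_finsetSum _ fun k hk => integrable_finsetSum _ fun σ _ => hterm k hk σ
  simp only
  rw [e1, ← integral_sub hKi hsumi, ← Real.norm_eq_abs]
  have hwi : IntegrableOn (fun u => l ^ (n + 1) * (|f u - P u| * (‖u - x‖ ^ (d + n + 1))⁻¹)) S := by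
    apply Integrable.const_mul
    have h := kernel_integrable_aux (b := fun w => (‖w‖ ^ (d + n + 1))⁻¹) (by
      apply ContinuousOn.inv₀ (by fun_prop)
      intro w hw
      have : ‖w‖ ≠ 0 := norm_ne_zero_iff.2 hw
      positivity) hSm x hl hSx hFS.abs
    refine h.congr (ae_of_all _ fun u => ?_)
    simp only
    rw [norm_sub_rev, mul_comm]
  calc _ ≤ ∫ u in S, (CK * d ^ (n + 1)) *
        (l ^ (n + 1) * (|f u - P u| * (‖u - x‖ ^ (d + n + 1))⁻¹)) := by
        apply norm_integral_le_of_norm_le (hwi.const_mul _)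
        rw [ae_restrict_iff' hSm]
        refine ae_of_all _ fun u hu => ?_
        obtain ⟨g1, g2, g3⟩ := far_geom hl hy hu.2
        have hw0 : x - u ≠ 0 := by
          intro h0; rw [h0, norm_zero] at g1; linarith
        have ht := htay (x - u) (y - x) hw0 (g2.trans (by gcongr)) (fun t ht => (g3 t ht).2)
        have e2 : x - u + (y - x) = y - u := by abel
        rw [e2] at ht
        have e3 : K (y - u) * (f u - P u) - ∑ k ∈ Finset.range (n + 1), ∑ σ : Fin k → Fin d,
            a k σ (x - u) * (f u - P u) * ∏ i, (y (σ i) - x (σ i)) =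
            (K (y - u) - ∑ k ∈ Finset.range (n + 1), ∑ σ : Fin k → Fin d,
            a k σ (x - u) * ∏ i, (y - x) (σ i)) * (f u - P u) := by
          rw [sub_mul, Finset.sum_mul]
          congr 1
          apply Finset.sum_congr rfl
          intro k _
          rw [Finset.sum_mul]
          apply Finset.sum_congr rfl
          intro σ _
          simp only [PiLp.sub_apply]
          ring
        rw [e3, Real.norm_eq_abs, abs_mul]
        calc _ ≤ CK * ((d * l) ^ (n + 1) * (‖x - u‖ ^ (d + n + 1))⁻¹) * |f u - P u| := by
              gcongr
              refine ht.trans ?_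
              gcongr
          _ = _ := by rw [norm_sub_rev x u, mul_pow]; ring
    _ = (CK * d ^ (n + 1)) * ∫ u in S, l ^ (n + 1) * (|f u - P u| * (‖u - x‖ ^ (d + n + 1))⁻¹) := by
        rw [integral_const_mul (CK * (d:ℝ) ^ (n + 1))]
    _ ≤ (CK * d ^ (n + 1)) * (C1 * ((M + ∫ y in D, |f y|) * ω l)) := by gcongr
    _ = _ := by ring

/-! ### Conversions and the final assembly -/

lemma lint_conv {d n : ℕ} {D : Set (EuclideanSpace ℝ (Fin d))} {f P : EuclideanSpace ℝ (Fin d) → ℝ}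
    (hf : IntegrableOn f D) (hP : P ∈ PolyLE d n) {z : EuclideanSpace ℝ (Fin d)} {t : ℝ}
    (ht : 0 < t) (hz : cube z t ⊆ D) :
    ∫⁻ x in cube z t, ENNReal.ofReal |f x - P x| =
      ENNReal.ofReal (∫ x in cube z t, |f x - P x|) :=
  (ofReal_integral_eq_lintegral_ofReal
    ((hf.mono_set hz).sub (poly_integrableOn_cube hP z t ht.le)).abs
    (ae_of_all _ fun _ => abs_nonneg _)).symm

lemma seminorm_inf_lt {d n : ℕ} {ω : ℝ → ℝ} {D : Set (EuclideanSpace ℝ (Fin d))}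
    {f : EuclideanSpace ℝ (Fin d) → ℝ} {b : ℝ≥0∞} (hb : zygSeminorm ω n D f < b)
    {z : EuclideanSpace ℝ (Fin d)} {t : ℝ} (ht : 0 < t) (hz : cube z t ⊆ D) :
    ∃ P ∈ PolyLE d n, (ENNReal.ofReal (ω t * t ^ d))⁻¹ *
      ∫⁻ x in cube z t, ENNReal.ofReal |f x - P x| < b := by
  have h1 : (⨅ (P : EuclideanSpace ℝ (Fin d) → ℝ) (_ : P ∈ PolyLE d n),
      (ENNReal.ofReal (ω t * t ^ d))⁻¹ * ∫⁻ x in cube z t, ENNReal.ofReal |f x - P x|) < b := by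
    refine lt_of_le_of_lt ?_ hb
    unfold zygSeminorm
    exact le_iSup_of_le z (le_iSup_of_le t (le_iSup_of_le ht (le_iSup_of_le hz le_rfl)))
  simp only [iInf_lt_iff] at h1
  obtain ⟨P, hP, h⟩ := h1
  exact ⟨P, hP, h⟩

lemma hasApprox_of_pos {d n : ℕ} {ω : ℝ → ℝ} {D : Set (EuclideanSpace ℝ (Fin d))}
    {f : EuclideanSpace ℝ (Fin d) → ℝ} (hf : IntegrableOn f D) (hfin : zygSeminorm ω n D f < ⊤)
    (hpos : ∀ t, 0 < t → 0 < ω t) {ε : ℝ} (hε : 0 < ε) :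
    HasApprox ω n D f ((zygSeminorm ω n D f).toReal + ε) := by
  intro z t ht hz
  have hN : 0 ≤ (zygSeminorm ω n D f).toReal := ENNReal.toReal_nonneg
  have hlt : zygSeminorm ω n D f < ENNReal.ofReal ((zygSeminorm ω n D f).toReal + ε) := by
    rw [ENNReal.lt_ofReal_iff_toReal_lt hfin.ne]
    linarith
  obtain ⟨P, hP, h⟩ := seminorm_inf_lt hlt ht hz
  refine ⟨P, hP, ?_⟩
  have hωt := hpos t ht
  have hw : 0 < ω t * t ^ d := by positivity
  rw [lint_conv hf hP ht hz, ← ENNReal.ofReal_inv_of_pos hw, ← ENNReal.ofReal_mul (by positivity),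
    ENNReal.ofReal_lt_ofReal_iff (by positivity), inv_mul_lt_iff₀ hw] at h
  linarith

lemma hasApprox_of_zero {d n : ℕ} {ω : ℝ → ℝ} {D : Set (EuclideanSpace ℝ (Fin d))}
    {f : EuclideanSpace ℝ (Fin d) → ℝ} (hf : IntegrableOn f D) (hfin : zygSeminorm ω n D f < ⊤)
    (hz : ∀ t, 0 < t → ω t = 0) : HasApprox ω n D f 0 := by
  intro z t ht hzt
  obtain ⟨P, hP, h⟩ := seminorm_inf_lt hfin ht hzt
  refine ⟨P, hP, ?_⟩
  rw [lint_conv hf hP ht hzt, hz t ht, zero_mul, ENNReal.ofReal_zero, ENNReal.inv_zero] at h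
  by_contra hcon
  push Not at hcon
  rw [zero_mul, zero_mul] at hcon
  rw [ENNReal.top_mul (by simpa using hcon)] at h
  exact lt_irrefl _ h

lemma nearBest_real {d n : ℕ} {ω : ℝ → ℝ} {D : Set (EuclideanSpace ℝ (Fin d))}
    {f P : EuclideanSpace ℝ (Fin d) → ℝ} (hf : IntegrableOn f D) (hfin : zygSeminorm ω n D f < ⊤)
    {C₀ : ℝ} (hC₀ : 0 ≤ C₀) {x : EuclideanSpace ℝ (Fin d)} {l : ℝ} (hl : 0 < l) (hωl : 0 ≤ ω l)
    (hx : cube x l ⊆ D) (h : IsNearBestApprox ω n D f C₀ x l P) :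
    ∫ y in cube x l, |f y - P y| ≤ C₀ * (zygSeminorm ω n D f).toReal * ω l * l ^ d := by
  obtain ⟨hP, h⟩ := h
  have hN : 0 ≤ (zygSeminorm ω n D f).toReal := ENNReal.toReal_nonneg
  have hw : 0 < l ^ d := by positivity
  rw [lint_conv hf hP hl hx, ← ENNReal.ofReal_inv_of_pos hw, ← ENNReal.ofReal_mul (by positivity),
    ← ENNReal.ofReal_toReal hfin.ne, ← ENNReal.ofReal_mul (by positivity),
    ENNReal.ofReal_le_ofReal_iff (by positivity), inv_mul_le_iff₀ hw] at h
  linarith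

lemma avg_bound {d : ℕ} {x : EuclideanSpace ℝ (Fin d)} {l : ℝ} (hl : 0 < l)
    {G : EuclideanSpace ℝ (Fin d) → ℝ} {B : ℝ} (hG : ∀ y ∈ cube x l, |G y| ≤ B) :
    (ENNReal.ofReal (l ^ d))⁻¹ * ∫⁻ y in cube x l, ENNReal.ofReal |G y| ≤
      ENNReal.ofReal (volume.real (cube (0 : EuclideanSpace ℝ (Fin d)) 1) * B) := by
  have hB : 0 ≤ B := (abs_nonneg _).trans (hG x (center_mem_cube x hl))
  have hw : 0 < l ^ d := by positivity
  have h1 : ∫⁻ y in cube x l, ENNReal.ofReal |G y| ≤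
      ENNReal.ofReal (B * (l ^ d * volume.real (cube (0 : EuclideanSpace ℝ (Fin d)) 1))) := by
    calc _ ≤ ∫⁻ y in cube x l, ENNReal.ofReal B :=
          setLIntegral_mono' (cube_measurable x l) fun y hy => ENNReal.ofReal_le_ofReal (hG y hy)
      _ = ENNReal.ofReal B * volume (cube x l) := setLIntegral_const _ _
      _ = _ := by
          rw [ENNReal.ofReal_mul hB, ← volume_cube_scale x hl, Measure.real,
            ENNReal.ofReal_toReal (cube_isCompact x l hl.le).measure_lt_top.ne]
  refine (mul_le_mul_right h1 _).trans (le_of_eq ?_)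
  rw [← ENNReal.ofReal_inv_of_pos hw, ← ENNReal.ofReal_mul (by positivity)]
  congr 1
  field_simp

lemma cube_subset_of_near {d : ℕ} {x y : EuclideanSpace ℝ (Fin d)} {t m : ℝ}
    (hxy : dist y x ≤ t / 4) (hm : m ≤ t / 2) : cube y m ⊆ cube x t := by
  intro z hz i
  have h1 := hz i
  have h2 := abs_coord_le (y - x) i
  rw [dist_eq_norm] at hxy
  simp only [PiLp.sub_apply] at h2
  have h3 : z i - x i = (z i - y i) + (y i - x i) := by ring
  rw [h3]
  refine (abs_add_le _ _).trans ?_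
  linarith

lemma ae_eq_of_integral_le_zero {d n : ℕ} {D : Set (EuclideanSpace ℝ (Fin d))}
    {f P : EuclideanSpace ℝ (Fin d) → ℝ}
    (hf : IntegrableOn f D) (hP : P ∈ PolyLE d n) {z : EuclideanSpace ℝ (Fin d)} {t : ℝ}
    (ht : 0 < t) (hz : cube z t ⊆ D) (h : ∫ y in cube z t, |f y - P y| ≤ 0) :
    ∀ᵐ y, y ∈ cube z t → f y = P y := by
  rw [← ae_restrict_iff' (cube_measurable z t)]
  have h0 : ∫ y in cube z t, |f y - P y| = 0 :=
    le_antisymm h (integral_nonneg fun _ => abs_nonneg _)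
  have hi : IntegrableOn (fun y => |f y - P y|) (cube z t) :=
    ((hf.mono_set hz).sub (poly_integrableOn_cube hP z t ht.le)).abs
  have h1 := (integral_eq_zero_iff_of_nonneg (f := fun y => |f y - P y|)
    (fun _ => abs_nonneg _) hi).1 h0
  filter_upwards [h1] with y hy
  simp only [Pi.zero_apply, abs_eq_zero] at hy
  linarith

lemma zero_case {d n : ℕ} {ω : ℝ → ℝ} {D : Set (EuclideanSpace ℝ (Fin d))} (hDo : IsOpen D)
    (hDc : IsPreconnected D)
    {f P : EuclideanSpace ℝ (Fin d) → ℝ} (hf : IntegrableOn f D) (hP : P ∈ PolyLE d n)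
    (hap : HasApprox ω n D f 0) {x : EuclideanSpace ℝ (Fin d)} {l : ℝ} (hl : 0 < l)
    (hx : cube x l ⊆ D) (hxP : ∫ y in cube x l, |f y - P y| ≤ 0) :
    ∀ᵐ u, u ∈ D → f u = P u := by
  obtain ⟨A, hA⟩ := poly_norm d n
  set U : Set (EuclideanSpace ℝ (Fin d)) :=
    {z | ∃ t, 0 < t ∧ ∀ᵐ y, y ∈ cube z t → f y = P y} with hU
  have hUo : IsOpen U := by
    rw [Metric.isOpen_iff]
    rintro z ⟨t, ht, hzt⟩
    refine ⟨t / 4, by positivity, fun y hy => ⟨t / 2, by positivity, ?_⟩⟩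
    filter_upwards [hzt] with w hw hwy
    exact hw (cube_subset_of_near (mem_ball.1 hy).le le_rfl hwy)
  have hne : (D ∩ U).Nonempty := ⟨x, hx (center_mem_cube x hl), l, hl,
    ae_eq_of_integral_le_zero hf hP hl hx hxP⟩
  have hcl : closure U ∩ D ⊆ U := by
    rintro z ⟨hzU, hzD⟩
    obtain ⟨ε, hε, hball⟩ := Metric.isOpen_iff.1 hDo z hzD
    obtain ⟨t, ht, htε⟩ : ∃ t, 0 < t ∧ (d:ℝ) * t < ε := by
      refine ⟨ε / (d + 1), by positivity, ?_⟩
      rw [mul_div_assoc', div_lt_iff₀ (by positivity)]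
      linarith
    have hzt : cube z t ⊆ D := (cube_subset_closedBall z t ht.le).trans
      ((closedBall_subset_ball htε).trans hball)
    obtain ⟨Pz, hPz, hb⟩ := hap z t ht hzt
    rw [zero_mul, zero_mul] at hb
    have hfz := ae_eq_of_integral_le_zero hf hPz ht hzt hb
    obtain ⟨y, ⟨t', ht', hyt'⟩, hdist⟩ := Metric.mem_closure_iff.1 hzU (t / 4) (by positivity)
    have hm0 : 0 < min t' (t / 2) := lt_min ht' (by positivity)
    have hint : ∫ w in cube y (min t' (t / 2)), |Pz w - P w| = 0 := by
      apply integral_eq_zero_of_ae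
      rw [EventuallyEq, ae_restrict_iff' (cube_measurable _ _)]
      filter_upwards [hfz, hyt'] with w h1 h2 hw
      have e1 := h1 (cube_subset_of_near (by rw [dist_comm]; exact hdist.le) (min_le_right _ _) hw)
      have e2 := h2 (fun i => (hw i).trans (by
        have := min_le_left t' (t / 2)
        linarith))
      simp [← e1, ← e2]
    have heq : ∀ v, Pz v = P v := by
      intro v
      have h := hA.2 _ (polyLE_sub hPz hP) y v (min t' (t / 2))
        (max (min t' (t / 2)) ‖v - y‖) hm0 (le_max_left _ _)
        (fun i => (abs_coord_le (v - y) i).trans (le_max_right _ _))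
      rw [hint, mul_zero, mul_zero] at h
      have := abs_nonpos_iff.1 h
      linarith
    refine ⟨t, ht, ?_⟩
    filter_upwards [hfz] with w hw h
    rw [hw h, heq]
  have hDU := hDc.subset_of_closure_inter_subset hUo hne hcl
  have hnull : volume (D ∩ {u | f u ≠ P u}) = 0 := by
    apply measure_null_of_locally_null
    rintro z ⟨hzD, _⟩
    obtain ⟨t, ht, hzt⟩ := hDU hzD
    refine ⟨cube z t ∩ {u | f u ≠ P u}, ?_, ?_⟩
    · rw [mem_nhdsWithin]
      refine ⟨ball z (t / 2), isOpen_ball, mem_ball_self (by positivity), ?_⟩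
      rintro w ⟨hw, hw2⟩
      refine ⟨fun i => ?_, hw2.2⟩
      have := abs_coord_le (w - z) i
      rw [mem_ball, dist_eq_norm] at hw
      simp only [PiLp.sub_apply] at this
      linarith
    · rw [← nonpos_iff_eq_zero]
      refine (measure_mono ?_).trans (le_of_eq (ae_iff.1 hzt))
      rintro w ⟨h1, h2⟩ h3
      exact h2 (h3 h1)
  rw [ae_iff]
  refine measure_mono_null ?_ hnull
  intro u hu
  simp only [mem_ofPred_eq, Classical.not_imp] at hu
  exact ⟨hu.1, hu.2⟩

lemma side_le {d : ℕ} (hd : 0 < d) {D : Set (EuclideanSpace ℝ (Fin d))} {R : ℝ}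
    (hDR : ∀ x ∈ D, ∀ u ∈ D, ‖u - x‖ ≤ R) {x : EuclideanSpace ℝ (Fin d)} {l : ℝ} (hl : 0 < l)
    (hx : cube x l ⊆ D) : l ≤ 2 * R := by
  have h1 : x + (l / 2) • EuclideanSpace.single (⟨0, hd⟩ : Fin d) (1:ℝ) ∈ cube x l := by
    intro i
    simp only [PiLp.add_apply, PiLp.smul_apply, smul_eq_mul, add_sub_cancel_left]
    refine (coord_smul_le (by simp) (l / 2) (by positivity) i).trans le_rfl
  have := hDR x (hx (center_mem_cube x hl)) _ (hx h1)
  rw [add_sub_cancel_left, norm_smul, EuclideanSpace.norm_single, Real.norm_of_nonneg (by positivity)]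
    at this
  simp at this
  linarith

/-- **The far part.** For `f₃ = (f - P_Q) χ_{D∖2Q}`, the function
`g(y) = ∫_{D∖2Q} K(y-u) (f(u) - P_Q(u)) du` is well defined on `Q` and admits a
polynomial `P₃ ∈ 𝒫_n` with average deviation on `Q` at most `C ω(ℓ) ‖f‖`. -/
theorem statement_19 {d n : ℕ} (ω : ℝ → ℝ) (hω : IsModulusOfOrder ω n)
    (D : Set (EuclideanSpace ℝ (Fin d))) (hD : IsLipschitzDomain D)
    (Ω K : EuclideanSpace ℝ (Fin d) → ℝ)
    (hΩ : IsCZDensity d ((n : ℕ∞) + 1) Ω)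
    (hK : K = fun x => Ω x / ‖x‖ ^ d)
    (C₀ : ℝ) (hC₀ : 0 < C₀) :
    ∃ C : ℝ, 0 < C ∧
      ∀ f : EuclideanSpace ℝ (Fin d) → ℝ,
        LocallyIntegrableOn f D → IntegrableOn f D → zygSeminorm ω n D f < ⊤ →
        ∀ (x₀ : EuclideanSpace ℝ (Fin d)) (l : ℝ), 0 < l → cube x₀ (2 * l) ⊆ D →
          ∀ P : EuclideanSpace ℝ (Fin d) → ℝ,
            IsNearBestApprox ω n D f C₀ x₀ l P →
            (∀ y ∈ cube x₀ l,
              IntegrableOn (fun u => K (y - u) * (f u - P u))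
                (D \ cube x₀ (2 * l))) ∧
            ∃ P₃ ∈ PolyLE d n,
              (ENNReal.ofReal (l ^ d))⁻¹ *
                  ∫⁻ y in cube x₀ l, ENNReal.ofReal
                    |(∫ u in D \ cube x₀ (2 * l), K (y - u) * (f u - P u)) - P₃ y| ≤
                ENNReal.ofReal (C * ω l *
                  ((zygSeminorm ω n D f).toReal + ∫ x in D, |f x|)) := by
  have hDo : IsOpen D := hD.1
  have hDb : Bornology.IsBounded D := hD.2.2.1
  obtain ⟨R₀, hR₀⟩ : ∃ R₀, ∀ x ∈ D, ∀ u ∈ D, ‖u - x‖ ≤ R₀ := by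
    obtain ⟨R₀, h⟩ := Metric.isBounded_iff.1 hDb
    exact ⟨R₀, fun x hx u hu => by rw [← dist_eq_norm]; exact h hu hx⟩
  have hsubQ : ∀ (x : EuclideanSpace ℝ (Fin d)) (l : ℝ), 0 < l → cube x (2 * l) ⊆ D →
      cube x l ⊆ D := fun x l hl h y hy => h fun i => (hy i).trans (by linarith)
  have hint : ∀ f : EuclideanSpace ℝ (Fin d) → ℝ, IntegrableOn f D →
      ∀ (x₀ : EuclideanSpace ℝ (Fin d)) (l : ℝ), 0 < l → cube x₀ (2 * l) ⊆ D →
      ∀ P ∈ PolyLE d n, ∀ y ∈ cube x₀ l,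
        IntegrableOn (fun u => K (y - u) * (f u - P u)) (D \ cube x₀ (2 * l)) := by
    intro f hf x l hl hQ P hP y hy
    exact kernel_integrable hΩ hK hDo hR₀ (hf.sub (poly_integrableOn_bdd hDb hP)) hl
      (hsubQ x l hl hQ) hy
  have hzero : ∀ (G : EuclideanSpace ℝ (Fin d) → ℝ) (x : EuclideanSpace ℝ (Fin d)) (l b : ℝ),
      (∀ y, G y = 0) → ∃ P₃ ∈ PolyLE d n,
        (ENNReal.ofReal (l ^ d))⁻¹ * ∫⁻ y in cube x l, ENNReal.ofReal |G y - P₃ y| ≤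
          ENNReal.ofReal b := by
    intro G x l b hG
    refine ⟨fun _ => 0, polyLE_const 0, ?_⟩
    simp [hG]
  rcases Nat.eq_zero_or_pos d with hd0 | hdpos
  · subst hd0
    refine ⟨1, one_pos, ?_⟩
    intro f _ hf hfin x l hl hQ P hPn
    refine ⟨hint f hf x l hl hQ P hPn.1, hzero _ x l _ fun y => ?_⟩
    have : D \ cube x (2 * l) = ∅ := by
      ext u
      simp [cube]
    rw [this, Measure.restrict_empty, integral_zero_measure]
  obtain ⟨q, r, Cq, Cr, hm⟩ := modData_exists hω
  by_cases hex : ∃ t₀, 0 < t₀ ∧ ω t₀ = 0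
  · obtain ⟨t₀, ht₀, hωt₀⟩ := hex
    have hω0 : ∀ t, 0 < t → ω t = 0 := by
      intro t ht
      apply le_antisymm _ (hm.nonneg t ht.le)
      rcases le_total t t₀ with h | h
      · rw [← hωt₀]; exact hm.mono t t₀ ht.le h
      · have := hm.up t₀ t ht₀ h
        rwa [hωt₀, mul_zero] at this
    refine ⟨1, one_pos, ?_⟩
    intro f _ hf hfin x l hl hQ P hPn
    refine ⟨hint f hf x l hl hQ P hPn.1, hzero _ x l _ fun y => ?_⟩
    have hnb := nearBest_real hf hfin hC₀.le hl (hm.nonneg l hl.le) (hsubQ x l hl hQ) hPn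
    rw [hω0 l hl, mul_zero, zero_mul] at hnb
    have hae := zero_case hDo hD.2.1.isPreconnected hf hPn.1 (hasApprox_of_zero hf hfin hω0) hl
      (hsubQ x l hl hQ) hnb
    apply integral_eq_zero_of_ae
    rw [EventuallyEq, ae_restrict_iff' (hDo.measurableSet.diff (cube_measurable x _))]
    filter_upwards [hae] with u hu huD
    simp [hu huD.1]
  push Not at hex
  have hpos : ∀ t, 0 < t → 0 < ω t := fun t ht =>
    lt_of_le_of_ne (hm.nonneg t ht.le) (Ne.symm (hex t ht))
  obtain ⟨κ, T, s, hκ, hκ1, hT, hs, hcone⟩ := cone_condition hD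
  obtain ⟨R, hR⟩ : ∃ R, R = max T (max R₀ (2 * R₀)) := ⟨_, rfl⟩
  have hTR : T ≤ R := by rw [hR]; exact le_max_left _ _
  have hRR : R₀ ≤ R := by rw [hR]; exact (le_max_left _ _).trans (le_max_right _ _)
  have hRR2 : 2 * R₀ ≤ R := by rw [hR]; exact (le_max_right _ _).trans (le_max_right _ _)
  obtain ⟨C, hC, hmain⟩ := main_real hm hΩ hK hDo hDb hκ hκ1 hT hs hcone hC₀.le hTR
    (hpos R (by linarith)) (fun x hx u hu => (hR₀ x hx u hu).trans hRR)
  set V := volume.real (cube (0 : EuclideanSpace ℝ (Fin d)) 1) with hV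
  have hV0 : 0 ≤ V := measureReal_nonneg
  refine ⟨V * C + 1, by positivity, ?_⟩
  intro f _ hf hfin x l hl hQ2 P hPn
  refine ⟨hint f hf x l hl hQ2 P hPn.1, ?_⟩
  have hQ := hsubQ x l hl hQ2
  have hlR : l ≤ R := (side_le hdpos hR₀ hl hQ).trans hRR2
  obtain ⟨P₃, hP₃, hb⟩ := hmain f hf x l hl hlR hQ P hPn.1
  refine ⟨P₃, hP₃, ?_⟩
  have hnb := nearBest_real hf hfin hC₀.le hl (hm.nonneg l hl.le) hQ hPn
  have hωl := hm.nonneg l hl.le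
  obtain ⟨N, hN⟩ : ∃ N, N = (zygSeminorm ω n D f).toReal := ⟨_, rfl⟩
  have hN0 : 0 ≤ N := by rw [hN]; exact ENNReal.toReal_nonneg
  have happ := fun ε (hε : (0:ℝ) < ε) => hasApprox_of_pos hf hfin hpos hε
  rw [← hN] at hnb ⊢
  simp only [← hN] at happ
  obtain ⟨F, hF⟩ : ∃ F, F = ∫ y in D, |f y| := ⟨_, rfl⟩
  have hF0 : 0 ≤ F := by rw [hF]; exact integral_nonneg fun _ => abs_nonneg _
  rw [← hF] at hb ⊢
  have hpt : ∀ y ∈ cube x l, |(∫ u in D \ cube x (2 * l), K (y - u) * (f u - P u)) - P₃ y| ≤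
      C * ((N + F) * ω l) := by
    intro y hy
    apply le_of_forall_pos_le_add
    intro δ hδ
    have hCω : 0 ≤ C * ω l := by positivity
    have hε : 0 < δ / (C * ω l + 1) := by positivity
    have h1 := hb (N + δ / (C * ω l + 1)) (by positivity) (happ _ hε) (hnb.trans (by
      gcongr
      linarith)) y hy
    refine h1.trans ?_
    have h2 : C * ω l * (δ / (C * ω l + 1)) ≤ δ := by
      rw [mul_div_assoc', div_le_iff₀ (by positivity)]
      nlinarith
    linarith
  refine (avg_bound hl hpt).trans (ENNReal.ofReal_le_ofReal ?_)
  rw [← hV]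
  have : 0 ≤ ω l * (N + F) := by positivity
  linarith

end
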